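/- arXiv:2307.12164 — 7 statements merged into one kernel-verified Lean document; each statement's English description precedes it below -/
import Mathlib

section
/- Let α ∈ ℝ and β ∈ ℝ∖ℤ. Then Im(m̂_{α,β}(z)) > 0 for every z ∈ ℂ with Im(z) > 0 (i.e., m̂_{α,β} is a Nevanlinna–Herglotz function on the open upper half-plane) if and only if α ∈ (-1,∞) ∪ {-1,-2,-3,...} and β ∈ (-1,0) ∪ (0,1). -/
/-!
Put `u = (1+α+β)/2`, `v = (1+α-β)/2`, `s = σ/2`. Then `s² = u² + z` runs over the upper half-plane
with `z`, and `mhat α β z` is a real constant times the Gamma quotient `gq u v s`. As a function of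
`ζ = s²`, this quotient has zeros `(k+v)²` and poles `(k+u)²`, `k = 0, 1, 2, …`; by Euler's limit
formula it is the limit of a positive multiple of `∏ ((k+v)² - ζ)/((k+u)² - ζ)` (`tendsto_gq`).
Exchanging `u` and `v` inverts the quotient, so one may assume `u - v = |β| > 0`.

*Sufficiency.* If `0 < u - v < 1` and `u + v = 1 + α > 0`, zeros and poles interlace,
`v² < u² < (1+v)² < (1+u)² < ⋯`, so the arguments of the partial products are sums of lengths of
disjoint intervals and stay in a compact subset of `(-π, 0)` (`gq_im_neg`). If `u + v = -N`, the
first `N + 1` zeros and poles cancel and what remains is the quotient with `u`, `v` both shifted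
by `N + 1` (`gq_im_neg_of_neg_nat`).

*Necessity.* If the quotient is never real for `ζ` in the upper half-plane, a continuous argument of
it along any path varies by at most `π`. On horizontal segments approaching the real axis this
argument tends to `-π` times the number of zeros minus the number of poles below `t = Re ζ`, so any
two values of this counting function differ by at most `1` (`abs_cnt_sub_le_one`). It vanishes for
`t < 0` and takes the value `⌊u - v⌋ + 1` at suitable large `t` (`exists_large`), so `u - v < 1`;
and if `u + v` is negative and not an integer it takes the value `-1` (`exists_deficit`), which is
incompatible with the value `1`.
-/

open Complex

/-- Principal branch of the square root `σ_{α,β}(z) = ((1+α+β)^2 + 4z)^{1/2}`. -/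
noncomputable def sigmaAB (α β : ℝ) (z : ℂ) : ℂ :=
  (((1 + α + β : ℝ) : ℂ) ^ 2 + 4 * z) ^ ((1 : ℂ) / 2)

/-- The Weyl–Titchmarsh–Kodaira function `m̂_{α,β}`. -/
noncomputable def mhat (α β : ℝ) (z : ℂ) : ℂ :=
  -(Complex.Gamma (1 - (β : ℂ)) /
      ((((2 : ℝ) ^ (1 + α + β) : ℝ) : ℂ) * (β : ℂ) * Complex.Gamma (1 + (β : ℂ)))) *
    (Complex.Gamma ((1 + (α : ℂ) + (β : ℂ) + sigmaAB α β z) / 2) *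
      Complex.Gamma ((1 + (α : ℂ) + (β : ℂ) - sigmaAB α β z) / 2)) /
    (Complex.Gamma ((1 + (α : ℂ) - (β : ℂ) + sigmaAB α β z) / 2) *
      Complex.Gamma ((1 + (α : ℂ) - (β : ℂ) - sigmaAB α β z) / 2))


open Filter Topology

/-! ### Phases -/

/-- `θ` is an argument of `w`, not necessarily the principal one (vacuous for `w = 0`). -/
def HasPhase (w : ℂ) (θ : ℝ) : Prop :=
  w = (‖w‖ : ℂ) * Complex.exp ((θ : ℂ) * I)

namespace HasPhase

theorem mul {w₁ w₂ : ℂ} {θ₁ θ₂ : ℝ} (h₁ : HasPhase w₁ θ₁) (h₂ : HasPhase w₂ θ₂) :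
    HasPhase (w₁ * w₂) (θ₁ + θ₂) := by
  unfold HasPhase at *
  calc w₁ * w₂ = ((‖w₁‖ : ℂ) * Complex.exp ((θ₁ : ℂ) * I)) *
        ((‖w₂‖ : ℂ) * Complex.exp ((θ₂ : ℂ) * I)) := by rw [← h₁, ← h₂]
    _ = _ := by
      rw [norm_mul]; push_cast; rw [add_mul, Complex.exp_add]; ring

theorem div {w₁ w₂ : ℂ} {θ₁ θ₂ : ℝ} (h₁ : HasPhase w₁ θ₁) (h₂ : HasPhase w₂ θ₂) :
    HasPhase (w₁ / w₂) (θ₁ - θ₂) := by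
  unfold HasPhase at *
  calc w₁ / w₂ = ((‖w₁‖ : ℂ) * Complex.exp ((θ₁ : ℂ) * I)) /
        ((‖w₂‖ : ℂ) * Complex.exp ((θ₂ : ℂ) * I)) := by rw [← h₁, ← h₂]
    _ = _ := by
      rw [norm_div]; push_cast; rw [sub_mul, Complex.exp_sub, mul_div_mul_comm]

theorem ofReal_nonneg {r : ℝ} (hr : 0 ≤ r) : HasPhase (r : ℂ) 0 := by
  simp [HasPhase, abs_of_nonneg hr]

theorem prod {w : ℕ → ℂ} {θ : ℕ → ℝ} (h : ∀ k, HasPhase (w k) (θ k)) (n : ℕ) :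
    HasPhase (∏ k ∈ Finset.range n, w k) (∑ k ∈ Finset.range n, θ k) := by
  induction n with
  | zero => simp [HasPhase]
  | succ n ih => rw [Finset.prod_range_succ, Finset.sum_range_succ]; exact ih.mul (h n)

theorem im_eq {w : ℂ} {θ : ℝ} (h : HasPhase w θ) : w.im = ‖w‖ * Real.sin θ := by
  unfold HasPhase at h
  conv_lhs => rw [h]
  rw [Complex.im_ofReal_mul, Complex.exp_ofReal_mul_I_im]

theorem arg (w : ℂ) : HasPhase w (Complex.arg w) := (Complex.norm_mul_exp_arg_mul_I w).symm

end HasPhase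

/-- For `ζ` in the upper half-plane and real `x`, the argument of `I * (x - ζ)`. -/
noncomputable def ang (ζ : ℂ) (x : ℝ) : ℝ := Real.arctan ((x - ζ.re) / ζ.im)

theorem hasPhase_ang {ζ : ℂ} (hζ : 0 < ζ.im) (x : ℝ) : HasPhase (I * ((x : ℂ) - ζ)) (ang ζ x) := by
  have h : Complex.arg (I * ((x : ℂ) - ζ)) = ang ζ x := by
    have hre : (I * ((x : ℂ) - ζ)).re = ζ.im := by simp
    have him : (I * ((x : ℂ) - ζ)).im = x - ζ.re := by simp
    have h1 := Complex.tan_arg (I * ((x : ℂ) - ζ))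
    rw [hre, him] at h1
    have h2 : |Complex.arg (I * ((x : ℂ) - ζ))| < Real.pi / 2 := by
      rw [Complex.abs_arg_lt_pi_div_two_iff]; left; rw [hre]; exact hζ
    rw [ang, ← h1, Real.arctan_tan (by linarith [abs_lt.1 h2]) (abs_lt.1 h2).2]
  rw [← h]; exact HasPhase.arg _

theorem hasPhase_ratio {ζ : ℂ} (hζ : 0 < ζ.im) (x y : ℝ) :
    HasPhase (((x : ℂ) - ζ) / ((y : ℂ) - ζ)) (ang ζ x - ang ζ y) := by
  have := (hasPhase_ang hζ x).div (hasPhase_ang hζ y)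
  rwa [mul_div_mul_left _ _ I_ne_zero] at this

theorem ang_lt_ang {ζ : ℂ} (hζ : 0 < ζ.im) {x y : ℝ} (h : x < y) : ang ζ x < ang ζ y := by
  apply Real.arctan_strictMono
  gcongr

/-! ### The Gamma quotient -/

/-- The Gamma quotient underlying `mhat`, as a function of `s = σ / 2`. It is even in `s`. -/
noncomputable def gq (u v : ℝ) (s : ℂ) : ℂ :=
  Complex.Gamma (u + s) * Complex.Gamma (u - s) / (Complex.Gamma (v + s) * Complex.Gamma (v - s))

theorem gq_neg (u v : ℝ) (s : ℂ) : gq u v (-s) = gq u v s := by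
  simp only [gq, sub_neg_eq_add, ← sub_eq_add_neg]
  rw [mul_comm (Complex.Gamma (u - s)), mul_comm (Complex.Gamma (v - s))]

theorem gq_swap (u v : ℝ) (s : ℂ) : gq v u s = (gq u v s)⁻¹ := by
  simp [gq]

theorem add_ne_neg_natCast (u : ℝ) {s : ℂ} (hs : 0 < (s ^ 2).im) (m : ℕ) :
    (u : ℂ) + s ≠ -m := by
  intro h
  have : s = ((-m - u : ℝ) : ℂ) := by push_cast; linear_combination h
  rw [this, ← Complex.ofReal_pow, Complex.ofReal_im] at hs
  exact lt_irrefl _ hs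

theorem sub_ne_neg_natCast (u : ℝ) {s : ℂ} (hs : 0 < (s ^ 2).im) (m : ℕ) :
    (u : ℂ) - s ≠ -m := by
  rw [sub_eq_add_neg]; exact add_ne_neg_natCast u (by simpa using hs) m

theorem Gamma_mul_ne_zero (u : ℝ) {s : ℂ} (hs : 0 < (s ^ 2).im) :
    Complex.Gamma (u + s) * Complex.Gamma (u - s) ≠ 0 :=
  mul_ne_zero (Complex.Gamma_ne_zero (add_ne_neg_natCast u hs))
    (Complex.Gamma_ne_zero (sub_ne_neg_natCast u hs))

theorem gq_ne_zero (u v : ℝ) {s : ℂ} (hs : 0 < (s ^ 2).im) : gq u v s ≠ 0 :=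
  div_ne_zero (Gamma_mul_ne_zero u hs) (Gamma_mul_ne_zero v hs)

theorem ofReal_sub_sq_ne_zero (x : ℝ) {s : ℂ} (hs : 0 < (s ^ 2).im) : (x : ℂ) - s ^ 2 ≠ 0 := by
  intro h
  rw [← sub_eq_zero.1 h, Complex.ofReal_im] at hs
  exact lt_irrefl _ hs

/-- The functional equation `Γ(w + 1) = w Γ(w)`, applied to all four factors. -/
theorem gq_succ (u v : ℝ) {s : ℂ} (hs : 0 < (s ^ 2).im) :
    gq u v s = (((v ^ 2 : ℝ) : ℂ) - s ^ 2) / (((u ^ 2 : ℝ) : ℂ) - s ^ 2) * gq (u + 1) (v + 1) s := by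
  have key : ∀ x : ℝ, Complex.Gamma (((x + 1 : ℝ) : ℂ) + s) * Complex.Gamma (((x + 1 : ℝ) : ℂ) - s)
      = (((x ^ 2 : ℝ) : ℂ) - s ^ 2) * (Complex.Gamma (x + s) * Complex.Gamma (x - s)) := by
    intro x
    have e1 : ((x + 1 : ℝ) : ℂ) + s = (x + s) + 1 := by push_cast; ring
    have e2 : ((x + 1 : ℝ) : ℂ) - s = (x - s) + 1 := by push_cast; ring
    have n1 : (x : ℂ) + s ≠ 0 := by simpa using add_ne_neg_natCast x hs 0
    have n2 : (x : ℂ) - s ≠ 0 := by simpa using sub_ne_neg_natCast x hs 0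
    rw [e1, e2, Complex.Gamma_add_one _ n1, Complex.Gamma_add_one _ n2]
    push_cast; ring
  rw [gq, gq, key, key]
  have h1 := ofReal_sub_sq_ne_zero (u ^ 2) hs
  have h2 := ofReal_sub_sq_ne_zero (v ^ 2) hs
  have h3 := Gamma_mul_ne_zero u hs
  have h4 := Gamma_mul_ne_zero v hs
  field_simp

/-- The zeros `(k + v)²` and poles `(k + u)²`, in the variable `s²`, with `k < n` split off. -/
theorem gq_shift (u v : ℝ) {s : ℂ} (hs : 0 < (s ^ 2).im) (n : ℕ) :
    gq u v s = (∏ k ∈ Finset.range n, ((((k + v) ^ 2 : ℝ) : ℂ) - s ^ 2) /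
      ((((k + u) ^ 2 : ℝ) : ℂ) - s ^ 2)) * gq (n + u) (n + v) s := by
  induction n with
  | zero => simp
  | succ n ih =>
    rw [ih, Finset.prod_range_succ, gq_succ (n + u) (n + v) hs, mul_assoc]
    congr 3 <;> push_cast <;> ring

theorem prod_GammaSeq (u : ℝ) (s : ℂ) (n : ℕ) :
    Complex.GammaSeq (u + s) n * Complex.GammaSeq (u - s) n =
      ((n : ℂ) ^ ((u : ℂ) + s) * (n : ℂ) ^ ((u : ℂ) - s)) * (n.factorial : ℂ) ^ 2 /
        ∏ k ∈ Finset.range (n + 1), ((((k + u) ^ 2 : ℝ) : ℂ) - s ^ 2) := by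
  rw [Complex.GammaSeq, Complex.GammaSeq, div_mul_div_comm, ← Finset.prod_mul_distrib]
  congr 1
  · ring
  · refine Finset.prod_congr rfl fun k _ => ?_
    push_cast; ring

/-- Euler's limit formula for the Gamma function, in the form of a product formula for `gq`. -/
theorem tendsto_gq (u v : ℝ) {s : ℂ} (hs : 0 < (s ^ 2).im) :
    Tendsto (fun n : ℕ => (((n : ℝ) ^ (2 * u - 2 * v) : ℝ) : ℂ) *
      ∏ k ∈ Finset.range (n + 1), ((((k + v) ^ 2 : ℝ) : ℂ) - s ^ 2) /
      ((((k + u) ^ 2 : ℝ) : ℂ) - s ^ 2)) atTop (𝓝 (gq u v s)) := by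
  have h := ((Complex.GammaSeq_tendsto_Gamma (u + s)).mul
    (Complex.GammaSeq_tendsto_Gamma (u - s))).div
    ((Complex.GammaSeq_tendsto_Gamma (v + s)).mul
    (Complex.GammaSeq_tendsto_Gamma (v - s))) (Gamma_mul_ne_zero v hs)
  refine h.congr' ?_
  filter_upwards [eventually_gt_atTop 0] with n hn
  have hn' : (n : ℂ) ≠ 0 := Nat.cast_ne_zero.2 hn.ne'
  simp only [Pi.div_apply]
  rw [prod_GammaSeq, prod_GammaSeq, ← Complex.cpow_add _ _ hn', ← Complex.cpow_add _ _ hn',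
    Finset.prod_div_distrib, Complex.ofReal_cpow (Nat.cast_nonneg n)]
  have e : ∀ x : ℝ, (x : ℂ) + s + (x - s) = ((2 * x : ℝ) : ℂ) := by intro x; push_cast; ring
  rw [e, e]
  push_cast
  rw [Complex.cpow_sub _ _ hn']
  have f : (n.factorial : ℂ) ≠ 0 := Nat.cast_ne_zero.2 n.factorial_ne_zero
  have h1 : ∏ k ∈ Finset.range (n + 1), (((k : ℂ) + u) ^ 2 - s ^ 2) ≠ 0 :=
    Finset.prod_ne_zero_iff.2 fun k _ => by
      exact_mod_cast ofReal_sub_sq_ne_zero (((k : ℝ) + u) ^ (2 : ℕ)) hs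
  have h2 : ∏ k ∈ Finset.range (n + 1), (((k : ℂ) + v) ^ 2 - s ^ 2) ≠ 0 :=
    Finset.prod_ne_zero_iff.2 fun k _ => by
      exact_mod_cast ofReal_sub_sq_ne_zero (((k : ℝ) + v) ^ (2 : ℕ)) hs
  have h3 : (n : ℂ) ^ (2 * (v : ℂ)) ≠ 0 := by simp [Complex.cpow_eq_zero_iff, hn']
  field_simp

/-! ### Interlacing gives the Herglotz property -/

/-- If `x₀ < y₀ < x₁ < y₁ < ⋯`, the intervals `(ang xₖ, ang yₖ)` are disjoint in `(-π/2, π/2)`. -/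
theorem sum_ang_mem {ζ : ℂ} (hζ : 0 < ζ.im) {x y : ℕ → ℝ} (h1 : ∀ k, x k < y k)
    (h2 : ∀ k, y k < x (k + 1)) (n : ℕ) :
    ang ζ (x 0) - ang ζ (y n) ≤ ∑ k ∈ Finset.range (n + 1), (ang ζ (x k) - ang ζ (y k)) ∧
    ∑ k ∈ Finset.range (n + 1), (ang ζ (x k) - ang ζ (y k)) ≤ ang ζ (x 0) - ang ζ (y 0) := by
  induction n with
  | zero => simp
  | succ n ih =>
    rw [Finset.sum_range_succ]
    have a1 := ang_lt_ang hζ (h1 (n + 1))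
    have a2 := ang_lt_ang hζ (h2 n)
    constructor <;> linarith [ih.1, ih.2]

theorem gq_im_neg {u v : ℝ} (ha : 0 < u + v) (h0 : 0 < u - v) (h1 : u - v < 1) {s : ℂ}
    (hs : 0 < (s ^ 2).im) : (gq u v s).im < 0 := by
  set x : ℕ → ℝ := fun k => (k + v) ^ 2 with hx
  set y : ℕ → ℝ := fun k => (k + u) ^ 2 with hy
  have hxy : ∀ k, x k < y k := fun k => by
    have : (0 : ℝ) < (u - v) * (2 * k + (u + v)) := by positivity
    simp only [hx, hy]; nlinarith
  have hyx : ∀ k, y k < x (k + 1) := fun k => by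
    have h3 : 0 < 1 - (u - v) := by linarith
    have : (0 : ℝ) < (1 - (u - v)) * (2 * k + 1 + (u + v)) := by positivity
    simp only [hx, hy]; push_cast; nlinarith
  set A : ℝ := ang (s ^ 2) (x 0) - Real.pi / 2
  set B : ℝ := ang (s ^ 2) (x 0) - ang (s ^ 2) (y 0)
  have hA : -Real.pi < A := by
    have := Real.neg_pi_div_two_lt_arctan ((x 0 - (s ^ 2).re) / (s ^ 2).im)
    simp only [A, ang]; linarith
  have hB : B < 0 := by
    have := ang_lt_ang hs (hxy 0)
    simp only [B]; linarith
  have hAB : A ≤ B := by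
    have := Real.arctan_lt_pi_div_two ((y 0 - (s ^ 2).re) / (s ^ 2).im)
    simp only [A, B, ang]; linarith
  -- The phases of the partial products stay in the compact set `[A, B] ⊆ (-π, 0)`.
  obtain ⟨θ, hθ, hmax⟩ := isCompact_Icc.exists_isMaxOn (Set.nonempty_Icc.2 hAB)
    (Real.continuous_sin.continuousOn (s := Set.Icc A B))
  have hsin : Real.sin θ < 0 :=
    Real.sin_neg_of_neg_of_neg_pi_lt (hθ.2.trans_lt hB) (hA.trans_le hθ.1)
  have hlim := tendsto_gq u v hs
  have hle : (gq u v s).im ≤ ‖gq u v s‖ * Real.sin θ := by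
    refine le_of_tendsto_of_tendsto' ((Complex.continuous_im.tendsto _).comp hlim)
      (((continuous_norm.tendsto _).comp hlim).mul_const _) fun n => ?_
    have hp := (HasPhase.ofReal_nonneg (Real.rpow_nonneg (Nat.cast_nonneg n) (2 * u - 2 * v))).mul
      (HasPhase.prod (fun k => hasPhase_ratio hs (x k) (y k)) (n + 1))
    rw [zero_add] at hp
    have hm := sum_ang_mem hs hxy hyx n
    simp only [Function.comp_apply]
    have hp' := hp.im_eq
    simp only [hx, hy] at hp'
    rw [hp']
    refine mul_le_mul_of_nonneg_left (hmax ⟨?_, hm.2⟩) (norm_nonneg _)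
    have := Real.arctan_lt_pi_div_two ((y n - (s ^ 2).re) / (s ^ 2).im)
    refine le_trans ?_ hm.1
    simp only [A, ang]; linarith
  have := mul_neg_of_pos_of_neg (norm_pos_iff.2 (gq_ne_zero u v hs)) hsin
  linarith

/-- When `u + v = -N`, the first `N + 1` zeros and poles cancel, since `N - k + v = -(k + u)`. -/
theorem gq_im_neg_of_neg_nat {u v : ℝ} {N : ℕ} (ha : u + v = -N) (h0 : 0 < u - v)
    (h1 : u - v < 1) {s : ℂ} (hs : 0 < (s ^ 2).im) : (gq u v s).im < 0 := by
  have hprod : (∏ k ∈ Finset.range (N + 1), ((((k + v) ^ 2 : ℝ) : ℂ) - s ^ 2) /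
      ((((k + u) ^ 2 : ℝ) : ℂ) - s ^ 2)) = 1 := by
    rw [Finset.prod_div_distrib]
    rw [← Finset.prod_range_reflect (fun k : ℕ => ((((k + v) ^ 2 : ℝ) : ℂ) - s ^ 2))]
    rw [Finset.prod_congr rfl (g := fun k : ℕ => ((((k + u) ^ 2 : ℝ) : ℂ) - s ^ 2))]
    · exact div_self (Finset.prod_ne_zero_iff.2 fun k _ => ofReal_sub_sq_ne_zero _ hs)
    · intro k hk
      have hk' : k ≤ N := Nat.lt_succ_iff.1 (Finset.mem_range.1 hk)
      have : ((N + 1 - 1 - k : ℕ) : ℝ) + v = -(k + u) := by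
        rw [Nat.add_sub_cancel, Nat.cast_sub hk']; linarith
      rw [this, neg_sq]
  rw [gq_shift u v hs (N + 1), hprod, one_mul]
  apply gq_im_neg _ _ _ hs <;> push_cast <;> linarith

/-! ### Boundary phases and the counting function -/

/-- A square root on the closed upper half-plane, given by a formula continuous on all of `ℂ`. -/
noncomputable def rt (ζ : ℂ) : ℂ := ⟨√((‖ζ‖ + ζ.re) / 2), √((‖ζ‖ - ζ.re) / 2)⟩

theorem continuous_rt : Continuous rt := by
  have : rt = fun ζ : ℂ => ((√((‖ζ‖ + ζ.re) / 2) : ℝ) : ℂ) + ((√((‖ζ‖ - ζ.re) / 2) : ℝ) : ℂ) * I := by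
    ext ζ; exact Complex.mk_eq_add_mul_I _ _
  rw [this]
  have h1 : Continuous fun ζ : ℂ => √((‖ζ‖ + ζ.re) / 2) := by fun_prop
  have h2 : Continuous fun ζ : ℂ => √((‖ζ‖ - ζ.re) / 2) := by fun_prop
  exact (Complex.continuous_ofReal.comp h1).add
    ((Complex.continuous_ofReal.comp h2).mul continuous_const)

theorem rt_sq {ζ : ℂ} (h : 0 ≤ ζ.im) : rt ζ ^ 2 = ζ := by
  have hn := abs_le.1 (Complex.abs_re_le_norm ζ)
  have h1 : 0 ≤ (‖ζ‖ + ζ.re) / 2 := by linarith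
  have h2 : 0 ≤ (‖ζ‖ - ζ.re) / 2 := by linarith
  have h3 : √((‖ζ‖ + ζ.re) / 2) * √((‖ζ‖ - ζ.re) / 2) = ζ.im / 2 := by
    rw [← Real.sqrt_mul h1]
    have : (‖ζ‖ + ζ.re) / 2 * ((‖ζ‖ - ζ.re) / 2) = (ζ.im / 2) ^ 2 := by
      have := Complex.sq_norm ζ
      rw [Complex.normSq_apply] at this
      linear_combination this / 4
    rw [this, Real.sqrt_sq (by linarith)]
  apply Complex.ext
  · simp only [rt, pow_two, Complex.mul_re]
    rw [Real.mul_self_sqrt h1, Real.mul_self_sqrt h2]; ring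
  · simp only [rt, pow_two, Complex.mul_im]
    linarith

theorem rt_ofReal_re_lt {t U : ℝ} (hU : 0 < U) (ht : t < U ^ 2) : (rt (t : ℂ)).re < U := by
  simp only [rt, Complex.norm_real, Complex.ofReal_re, Real.norm_eq_abs]
  rw [Real.sqrt_lt' hU]
  rcases abs_cases t with h | h <;> nlinarith [sq_pos_of_pos hU]

theorem Gamma_mul_pos {t U : ℝ} (hU : 0 < U) (ht : t < U ^ 2) :
    ∃ r : ℝ, 0 < r ∧ Complex.Gamma (U + rt t) * Complex.Gamma (U - rt t) = r := by
  have hlt := rt_ofReal_re_lt hU ht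
  rcases le_total 0 t with h | h
  · have e : rt t = ((√t : ℝ) : ℂ) := by
      apply Complex.ext <;> simp [rt, abs_of_nonneg h]
    rw [e, Complex.ofReal_re] at hlt
    rw [e]
    refine ⟨Real.Gamma (U + √t) * Real.Gamma (U - √t),
      mul_pos (Real.Gamma_pos_of_pos (by positivity)) (Real.Gamma_pos_of_pos (by linarith)), ?_⟩
    rw [← Complex.ofReal_add, ← Complex.ofReal_sub, Complex.Gamma_ofReal, Complex.Gamma_ofReal,
      Complex.ofReal_mul]
  · have e0 : (rt t).re = 0 := by simp [rt, abs_of_nonpos h]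
    have e : (U : ℂ) - rt t = (starRingEnd ℂ) (U + rt t) := by
      apply Complex.ext <;> simp [e0]
    refine ⟨Complex.normSq (Complex.Gamma (U + rt t)), ?_, ?_⟩
    · exact Complex.normSq_pos.2 (Complex.Gamma_ne_zero_of_re_pos (by simp [e0, hU]))
    · rw [e, Complex.Gamma_conj, Complex.mul_conj]

theorem gq_rt_pos {t U V : ℝ} (hU : 0 < U) (hV : 0 < V) (htU : t < U ^ 2) (htV : t < V ^ 2) :
    ∃ r : ℝ, 0 < r ∧ gq U V (rt t) = r := by
  obtain ⟨r1, h1, e1⟩ := Gamma_mul_pos hU htU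
  obtain ⟨r2, h2, e2⟩ := Gamma_mul_pos hV htV
  exact ⟨r1 / r2, div_pos h1 h2, by rw [gq, e1, e2, Complex.ofReal_div]⟩

theorem continuousAt_Gamma_mul {U : ℝ} {ζ : ℂ} (h : (rt ζ).re < U) :
    ContinuousAt (fun ζ => Complex.Gamma (U + rt ζ) * Complex.Gamma (U - rt ζ)) ζ ∧
      Complex.Gamma (U + rt ζ) * Complex.Gamma (U - rt ζ) ≠ 0 := by
  have h0 : 0 ≤ (rt ζ).re := Real.sqrt_nonneg _
  have hp : 0 < ((U : ℂ) + rt ζ).re := by simp; linarith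
  have hm : 0 < ((U : ℂ) - rt ζ).re := by simp; linarith
  have hne : ∀ w : ℂ, 0 < w.re → ∀ m : ℕ, w ≠ -m := by
    rintro w hw m rfl
    have : (0 : ℝ) ≤ m := Nat.cast_nonneg m
    simp at hw; linarith
  refine ⟨ContinuousAt.mul ?_ ?_, mul_ne_zero (Complex.Gamma_ne_zero_of_re_pos hp)
    (Complex.Gamma_ne_zero_of_re_pos hm)⟩
  · exact ContinuousAt.comp (f := fun ζ => (U : ℂ) + rt ζ)
      (Complex.continuousAt_Gamma _ (hne _ hp)) (continuous_const.add continuous_rt).continuousAt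
  · exact ContinuousAt.comp (f := fun ζ => (U : ℂ) - rt ζ)
      (Complex.continuousAt_Gamma _ (hne _ hm)) (continuous_const.sub continuous_rt).continuousAt

theorem continuousAt_gq_rt {U V : ℝ} {ζ : ℂ} (hU : (rt ζ).re < U) (hV : (rt ζ).re < V) :
    ContinuousAt (fun ζ => gq U V (rt ζ)) ζ :=
  (continuousAt_Gamma_mul hU).1.div (continuousAt_Gamma_mul hV).1 (continuousAt_Gamma_mul hV).2

/-- The number of zeros `(k + v)²` minus the number of poles `(k + u)²` of `gq u v`, in the
variable `s²`, that lie below `t`, among the indices `k < n`. -/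
noncomputable def cnt (u v : ℝ) (n : ℕ) (t : ℝ) : ℝ :=
  ∑ k ∈ Finset.range n, ((if ((k : ℝ) + v) ^ 2 < t then (1 : ℝ) else 0) -
    (if ((k : ℝ) + u) ^ 2 < t then (1 : ℝ) else 0))

theorem tendsto_ang {x t : ℝ} (h : x ≠ t) :
    Tendsto (fun ε : ℝ => ang ((t : ℂ) + (ε : ℂ) * I) x) (𝓝[>] 0)
      (𝓝 (Real.pi / 2 - Real.pi * (if x < t then 1 else 0))) := by
  have e : ∀ ε : ℝ, ang ((t : ℂ) + (ε : ℂ) * I) x = Real.arctan ((x - t) * ε⁻¹) := by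
    intro ε; simp [ang, div_eq_mul_inv]
  simp only [e]
  rcases lt_or_gt_of_ne h with h | h
  · rw [if_pos h, mul_one, show Real.pi / 2 - Real.pi = -(Real.pi / 2) by ring]
    exact (tendsto_nhds_of_tendsto_nhdsWithin Real.tendsto_arctan_atBot).comp
      (tendsto_inv_nhdsGT_zero.const_mul_atTop_of_neg (by linarith))
  · rw [if_neg (not_lt.2 h.le), mul_zero, sub_zero]
    exact (tendsto_nhds_of_tendsto_nhdsWithin Real.tendsto_arctan_atTop).comp
      (tendsto_inv_nhdsGT_zero.const_mul_atTop (by linarith))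

theorem abs_sub_le_pi {f : ℝ → ℝ} {a b : ℝ} (hf : ContinuousOn f (Set.uIcc a b))
    (h : ∀ x ∈ Set.uIcc a b, Real.sin (f x) ≠ 0) : |f a - f b| ≤ Real.pi := by
  wlog hab : f a ≤ f b generalizing a b
  · rw [abs_sub_comm]
    rw [Set.uIcc_comm] at hf h
    exact this hf h (le_of_not_ge hab)
  by_contra hlt
  rw [abs_sub_comm, abs_of_nonneg (by linarith), not_le] at hlt
  have hpi := Real.pi_pos
  have h1 := Int.le_ceil (f a / Real.pi)
  have h2 := Int.ceil_lt_add_one (f a / Real.pi)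
  rw [div_le_iff₀ hpi] at h1
  have h3 : (⌈f a / Real.pi⌉ : ℝ) * Real.pi < f a + Real.pi := by
    have := mul_lt_mul_of_pos_right h2 hpi
    rwa [add_mul, div_mul_cancel₀ _ hpi.ne', one_mul] at this
  obtain ⟨x, hx, hfx⟩ := intermediate_value_uIcc hf
    (show (⌈f a / Real.pi⌉ : ℝ) * Real.pi ∈ Set.uIcc (f a) (f b) by
      rw [Set.uIcc_of_le hab]; exact ⟨h1, by linarith⟩)
  exact h x hx (by rw [hfx, Real.sin_int_mul_pi])

/-- If `gq u v` takes no real value when `s²` is in the upper half-plane, then along the horizontal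
segment at height `ε` a continuous phase of it varies by at most `π`. As `ε → 0` the phase at `t`
tends to `-π * cnt u v n t`, since the remaining factor `gq (n + u) (n + v)` is positive there. -/
theorem abs_cnt_sub_le_one {u v : ℝ} (h : ∀ s : ℂ, 0 < (s ^ 2).im → (gq u v s).im ≠ 0)
    {n : ℕ} (hu : 0 < n + u) (hv : 0 < n + v) {t₁ t₂ : ℝ}
    (hu₁ : t₁ < (n + u) ^ 2) (hv₁ : t₁ < (n + v) ^ 2) (hu₂ : t₂ < (n + u) ^ 2)
    (hv₂ : t₂ < (n + v) ^ 2)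
    (gu₁ : ∀ k : ℕ, ((k : ℝ) + u) ^ 2 ≠ t₁) (gv₁ : ∀ k : ℕ, ((k : ℝ) + v) ^ 2 ≠ t₁)
    (gu₂ : ∀ k : ℕ, ((k : ℝ) + u) ^ 2 ≠ t₂) (gv₂ : ∀ k : ℕ, ((k : ℝ) + v) ^ 2 ≠ t₂) :
    |cnt u v n t₁ - cnt u v n t₂| ≤ 1 := by
  set T : ℂ → ℂ := fun ζ => gq (n + u) (n + v) (rt ζ) with hT
  set p : ℝ → ℝ → ℂ := fun ε t => (t : ℂ) + (ε : ℂ) * I with hp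
  have hpim : ∀ ε t, (p ε t).im = ε := fun ε t => by simp [hp]
  have hpre : ∀ ε t, (p ε t).re = t := fun ε t => by simp [hp]
  set φ : ℝ → ℝ → ℝ := fun ε t => (∑ k ∈ Finset.range n,
    (ang (p ε t) (((k : ℝ) + v) ^ 2) - ang (p ε t) (((k : ℝ) + u) ^ 2))) +
      Complex.arg (T (p ε t)) with hφ
  have hseg : ∀ t ∈ Set.uIcc t₁ t₂, t < (n + u) ^ 2 ∧ t < (n + v) ^ 2 := fun t ht =>
    ⟨ht.2.trans_lt (max_lt hu₁ hu₂), ht.2.trans_lt (max_lt hv₁ hv₂)⟩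
  have hcont : ∀ t : ℝ, t < (n + u) ^ 2 → t < (n + v) ^ 2 → ContinuousAt T t := fun t h1 h2 =>
    continuousAt_gq_rt (rt_ofReal_re_lt hu h1) (rt_ofReal_re_lt hv h2)
  have hlim : ∀ t : ℝ, t < (n + u) ^ 2 → t < (n + v) ^ 2 →
      (∀ k : ℕ, ((k : ℝ) + u) ^ 2 ≠ t) → (∀ k : ℕ, ((k : ℝ) + v) ^ 2 ≠ t) →
      Tendsto (fun ε => φ ε t) (𝓝[>] 0) (𝓝 (-Real.pi * cnt u v n t)) := by
    intro t h1 h2 g1 g2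
    have e : -Real.pi * cnt u v n t = (∑ k ∈ Finset.range n,
        ((Real.pi / 2 - Real.pi * (if ((k : ℝ) + v) ^ 2 < t then 1 else 0)) -
        (Real.pi / 2 - Real.pi * (if ((k : ℝ) + u) ^ 2 < t then 1 else 0)))) + 0 := by
      rw [cnt, Finset.mul_sum, add_zero]
      exact Finset.sum_congr rfl fun k _ => by ring
    rw [e]
    refine Tendsto.add (tendsto_finsetSum _ fun k _ =>
      (tendsto_ang (g2 k)).sub (tendsto_ang (g1 k))) ?_
    obtain ⟨r, hr, er⟩ := gq_rt_pos hu hv h1 h2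
    have eT : T t = r := er
    have ha : ContinuousAt (fun ζ => Complex.arg (T ζ)) t :=
      ContinuousAt.comp (f := T) (Complex.continuousAt_arg (by
        rw [eT]; exact Complex.ofReal_mem_slitPlane.2 hr)) (hcont t h1 h2)
    have hpt : Tendsto (fun ε => p ε t) (𝓝[>] 0) (𝓝 (t : ℂ)) := by
      have : Continuous fun ε => p ε t := by simp only [hp]; fun_prop
      have := (this.tendsto 0).mono_left (nhdsWithin_le_nhds (s := Set.Ioi 0))
      simpa [hp] using this
    have := ha.tendsto.comp hpt
    simpa [Function.comp_def, eT, Complex.arg_ofReal_of_nonneg hr.le] using this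
  -- By compactness, the tail factor is continuous and close to positive reals on a strip.
  have hgood : ∀ᶠ ε in 𝓝[>] (0 : ℝ), ∀ t ∈ Set.uIcc t₁ t₂,
      ContinuousAt T (p ε t) ∧ T (p ε t) ∈ Complex.slitPlane := by
    refine Filter.Eventually.filter_mono nhdsWithin_le_nhds ?_
    refine isCompact_uIcc.eventually_forall_of_forall_eventually fun t ht => ?_
    obtain ⟨h1, h2⟩ := hseg t ht
    obtain ⟨r, hr, er⟩ := gq_rt_pos hu hv h1 h2
    have eT : T t = r := er
    have hpc : Tendsto (fun z : ℝ × ℝ => p z.1 z.2) (𝓝 (0, t)) (𝓝 (t : ℂ)) := by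
      have : Continuous fun z : ℝ × ℝ => p z.1 z.2 := by simp only [hp]; fun_prop
      simpa [hp] using this.tendsto (0, t)
    have o1 : ∀ᶠ ζ in 𝓝 (t : ℂ), (rt ζ).re < n + u :=
      (Complex.continuous_re.comp continuous_rt).continuousAt.eventually_lt
        continuousAt_const (rt_ofReal_re_lt hu h1)
    have o2 : ∀ᶠ ζ in 𝓝 (t : ℂ), (rt ζ).re < n + v :=
      (Complex.continuous_re.comp continuous_rt).continuousAt.eventually_lt
        continuousAt_const (rt_ofReal_re_lt hv h2)
    have o3 : ∀ᶠ ζ in 𝓝 (t : ℂ), T ζ ∈ Complex.slitPlane :=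
      (hcont t h1 h2).eventually (Complex.isOpen_slitPlane.mem_nhds (by
        rw [eT]; exact Complex.ofReal_mem_slitPlane.2 hr))
    filter_upwards [hpc.eventually (o1.and (o2.and o3))] with z hz
    exact ⟨continuousAt_gq_rt hz.1 hz.2.1, hz.2.2⟩
  have hbound : ∀ᶠ ε in 𝓝[>] (0 : ℝ), |φ ε t₁ - φ ε t₂| ≤ Real.pi := by
    filter_upwards [hgood, self_mem_nhdsWithin] with ε hε hpos
    have hpos' : 0 < ε := hpos
    refine abs_sub_le_pi ?_ ?_
    · intro t ht
      refine ContinuousAt.continuousWithinAt ?_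
      have hpc : Continuous fun t => p ε t := by simp only [hp]; fun_prop
      refine ContinuousAt.add (Continuous.continuousAt ?_) ?_
      · refine continuous_finsetSum _ fun k _ => ?_
        simp only [ang, hpim, hpre]
        exact (Real.continuous_arctan.comp (by fun_prop)).sub
          (Real.continuous_arctan.comp (by fun_prop))
      · exact ContinuousAt.comp (f := fun t => T (p ε t)) (Complex.continuousAt_arg (hε t ht).2)
          (ContinuousAt.comp (f := fun t => p ε t) (hε t ht).1 hpc.continuousAt)
    · intro t _ hsin
      have him : 0 < (p ε t).im := by rw [hpim]; exact hpos'
      have hsq : rt (p ε t) ^ 2 = p ε t := rt_sq him.le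
      have hs : 0 < (rt (p ε t) ^ 2).im := by rw [hsq]; exact him
      refine h _ hs ?_
      have hph : HasPhase (gq u v (rt (p ε t))) (φ ε t) := by
        rw [gq_shift u v hs n]
        refine HasPhase.mul ?_ (HasPhase.arg _)
        rw [hsq]
        exact HasPhase.prod (fun k => hasPhase_ratio him _ _) n
      rw [hph.im_eq, hsin, mul_zero]
  have hl := ((hlim t₁ hu₁ hv₁ gu₁ gv₁).sub (hlim t₂ hu₂ hv₂ gu₂ gv₂)).abs
  have := le_of_tendsto hl hbound
  rw [← mul_sub, abs_mul, abs_neg, abs_of_pos Real.pi_pos] at this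
  exact (mul_le_iff_le_one_right Real.pi_pos).1 this

/-! ### Violations of interlacing -/

theorem sum_ite_Ico {P : ℕ → Prop} [DecidablePred P] {l m n : ℕ} (hm : m ≤ n)
    (h : ∀ k, P k ↔ l ≤ k ∧ k < m) :
    ∑ k ∈ Finset.range n, (if P k then (1 : ℝ) else 0) = ((m - l : ℕ) : ℝ) := by
  rw [Finset.sum_boole, ← Nat.card_Ico]
  congr 2
  ext k
  simp only [Finset.mem_filter, Finset.mem_range, Finset.mem_Ico, h]
  constructor
  · exact fun h => h.2
  · exact fun h => ⟨h.2.trans_le hm, h⟩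

theorem sq_lt_sq_iff {x w : ℝ} (hw : 0 ≤ w) : x ^ 2 < w ^ 2 ↔ -w < x ∧ x < w := by
  rw [sq_lt_sq, abs_of_nonneg hw, abs_lt]

/-- For `w = n₀ + 1 + u - g / 2`, where `g` is the fractional part of the noninteger `u - v` and `n₀`
is large, the poles below `w²` are those with `k ≤ n₀`
and the zeros below `w²` are those with `k ≤ n₀ + ⌊u - v⌋ + 1`. -/
theorem exists_large {u v : ℝ} (h0 : 0 < u - v) (hnonint : ∀ m : ℤ, u - v ≠ m) (B : ℝ) :
    ∃ (n : ℕ) (w : ℝ), B ≤ w ∧ B ≤ n ∧ 0 ≤ w ∧ w < n + u ∧ w < n + v ∧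
      (∀ k : ℕ, ((k : ℝ) + u) ^ 2 ≠ w ^ 2) ∧ (∀ k : ℕ, ((k : ℝ) + v) ^ 2 ≠ w ^ 2) ∧
      cnt u v n (w ^ 2) = ⌊u - v⌋₊ + 1 := by
  obtain ⟨n₀, hn₀⟩ := exists_nat_ge (|B| + 2 * |u| + 2 * |v|)
  set b : ℕ := ⌊u - v⌋₊ with hb
  have hb1 : (b : ℝ) < u - v :=
    lt_of_le_of_ne (Nat.floor_le h0.le) (fun h => hnonint b (by rw [← h]; simp))
  have hb2 : u - v < b + 1 := Nat.lt_floor_add_one _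
  have hb0 : (0 : ℝ) ≤ b := Nat.cast_nonneg b
  have hu := neg_abs_le u
  have hu' := le_abs_self u
  have hv := neg_abs_le v
  have hv' := le_abs_self v
  have hB := le_abs_self B
  have hB' := abs_nonneg B
  have hau := abs_nonneg u
  have hav := abs_nonneg v
  set g : ℝ := u - v - b with hg
  set w : ℝ := n₀ + u + 1 - g / 2 with hw
  have hw0 : 0 ≤ w := by linarith
  -- `w - u` and `w - v` lie strictly between consecutive integers.
  have ku : ∀ k : ℕ, ((k : ℝ) < n₀ + 1 - g / 2 ↔ k < n₀ + 1) := by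
    intro k
    constructor
    · intro h
      have : (k : ℝ) < ((n₀ + 1 : ℕ) : ℝ) := by push_cast; linarith
      exact_mod_cast this
    · intro h
      have : (k : ℝ) ≤ n₀ := by exact_mod_cast Nat.lt_succ_iff.1 h
      linarith
  have kv : ∀ k : ℕ, ((k : ℝ) < n₀ + b + 1 + g / 2 ↔ k < n₀ + b + 2) := by
    intro k
    constructor
    · intro h
      have : (k : ℝ) < ((n₀ + b + 2 : ℕ) : ℝ) := by push_cast; linarith
      exact_mod_cast this
    · intro h
      have : (k : ℝ) ≤ ((n₀ + b + 1 : ℕ) : ℝ) := by exact_mod_cast Nat.lt_succ_iff.1 h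
      push_cast at this
      linarith
  refine ⟨n₀ + b + 2, w, by linarith, by push_cast; linarith, hw0, by push_cast; linarith,
    by push_cast; linarith, ?_, ?_, ?_⟩
  · intro k hk
    have hk0 : (0 : ℝ) ≤ k := Nat.cast_nonneg k
    rcases sq_eq_sq_iff_eq_or_eq_neg.1 hk with h | h
    · have h1 : (k : ℝ) < ((n₀ + 1 : ℕ) : ℝ) := by push_cast; linarith
      have h2 := (ku k).2 (by exact_mod_cast h1)
      linarith
    · linarith
  · intro k hk
    have hk0 : (0 : ℝ) ≤ k := Nat.cast_nonneg k
    rcases sq_eq_sq_iff_eq_or_eq_neg.1 hk with h | h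
    · have h1 : (k : ℝ) < ((n₀ + b + 2 : ℕ) : ℝ) := by push_cast; linarith
      have h2 := (kv k).2 (by exact_mod_cast h1)
      linarith
    · linarith
  · rw [cnt, Finset.sum_sub_distrib, sum_ite_Ico (l := 0) (m := n₀ + b + 2) le_rfl,
      sum_ite_Ico (l := 0) (m := n₀ + 1) (by lia)]
    · push_cast [Nat.sub_zero]; ring
    · intro k
      have hk0 : (0 : ℝ) ≤ k := Nat.cast_nonneg k
      rw [sq_lt_sq_iff hw0, ← ku]
      constructor
      · intro h; exact ⟨Nat.zero_le k, by linarith [h.2]⟩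
      · intro h; constructor <;> linarith [h.2]
    · intro k
      have hk0 : (0 : ℝ) ≤ k := Nat.cast_nonneg k
      rw [sq_lt_sq_iff hw0, ← kv]
      constructor
      · intro h; exact ⟨Nat.zero_le k, by linarith [h.2]⟩
      · intro h; constructor <;> linarith [h.2]

/-- If `u + v` is negative and not an integer, some `w` has more poles than zeros below `w²`:
with `-(u + v) = N + f` the poles are those with `0 ≤ k ≤ N`, the zeros those with `1 ≤ k ≤ N`. -/
theorem exists_deficit {u v : ℝ} (h0 : 0 < u - v) (h1 : u - v < 1) (ha : u + v < 0)
    (hN : ∀ N : ℕ, u + v ≠ -N) :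
    ∃ w : ℝ, 0 ≤ w ∧ (∀ k : ℕ, ((k : ℝ) + u) ^ 2 ≠ w ^ 2) ∧
      (∀ k : ℕ, ((k : ℝ) + v) ^ 2 ≠ w ^ 2) ∧
      ∀ n : ℕ, -(u + v) + 1 ≤ n → cnt u v n (w ^ 2) = -1 := by
  set N : ℕ := ⌊-(u + v)⌋₊ with hNdef
  have hN1 : (N : ℝ) < -(u + v) :=
    lt_of_le_of_ne (Nat.floor_le (by linarith)) (fun h => hN N (by linarith))
  have hN2 : -(u + v) < N + 1 := Nat.lt_floor_add_one _
  have hN0 : (0 : ℝ) ≤ N := Nat.cast_nonneg N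
  obtain ⟨f, hf⟩ : ∃ f, f = -(u + v) - N := ⟨_, rfl⟩
  obtain ⟨β, hβ⟩ : ∃ β, β = u - v := ⟨_, rfl⟩
  have f0 : 0 < f := by linarith
  have f1 : f < 1 := by linarith
  have b0 : 0 < β := by linarith
  have b1 : β < 1 := by linarith
  have eu : u = -(N + f) / 2 + β / 2 := by linarith
  have ev : v = -(N + f) / 2 - β / 2 := by linarith
  -- The window `(-w, w)` corresponds to `-β(1-f) < k < N + f(1-β)` for the poles, and to
  -- `βf < k < N + f(1-β) + β` for the zeros.
  have m1 : 0 < β * f := mul_pos b0 f0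
  have m2 : 0 < β * (1 - f) := mul_pos b0 (by linarith)
  have m3 : 0 < f * (1 - β) := mul_pos f0 (by linarith)
  have m4 : 0 < (1 - f) * (1 - β) := mul_pos (by linarith) (by linarith)
  have m5 : β * f < 1 := by nlinarith
  obtain ⟨w, hw⟩ : ∃ w, w = (N + f) / 2 - β * (f - 1 / 2) := ⟨_, rfl⟩
  have hw0 : 0 ≤ w := by nlinarith
  have ku : ∀ k : ℕ, (k : ℝ) < N + f * (1 - β) ↔ k < N + 1 := by
    intro k
    constructor
    · intro h
      have : (k : ℝ) < ((N + 1 : ℕ) : ℝ) := by push_cast; nlinarith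
      exact_mod_cast this
    · intro h
      have : (k : ℝ) ≤ N := by exact_mod_cast Nat.lt_succ_iff.1 h
      linarith
  have kv : ∀ k : ℕ, (k : ℝ) < N + f * (1 - β) + β ↔ k < N + 1 := by
    intro k
    constructor
    · intro h
      have : (k : ℝ) < ((N + 1 : ℕ) : ℝ) := by push_cast; nlinarith
      exact_mod_cast this
    · intro h
      have : (k : ℝ) ≤ N := by exact_mod_cast Nat.lt_succ_iff.1 h
      linarith
  have kl : ∀ k : ℕ, β * f < (k : ℝ) ↔ 1 ≤ k := by
    intro k
    constructor
    · intro h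
      have : (0 : ℝ) < k := by linarith
      exact_mod_cast this
    · intro h
      have : (1 : ℝ) ≤ k := by exact_mod_cast h
      linarith
  refine ⟨w, hw0, ?_, ?_, ?_⟩
  · intro k hk
    have hk0 : (0 : ℝ) ≤ k := Nat.cast_nonneg k
    rcases sq_eq_sq_iff_eq_or_eq_neg.1 hk with h | h
    · have h1 : (k : ℝ) < ((N + 1 : ℕ) : ℝ) := by push_cast; nlinarith
      have h2 := (ku k).2 (by exact_mod_cast h1)
      linarith
    · linarith
  · intro k hk
    rcases sq_eq_sq_iff_eq_or_eq_neg.1 hk with h | h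
    · have h1 : (k : ℝ) < ((N + 1 : ℕ) : ℝ) := by push_cast; nlinarith
      have h2 := (kv k).2 (by exact_mod_cast h1)
      linarith
    · have h1 : (0 : ℝ) < k := by linarith
      have h2 := (kl k).2 (by exact_mod_cast h1)
      linarith
  · intro n hn
    have hn' : N + 1 ≤ n := by
      have : (N : ℝ) < n := by linarith
      exact_mod_cast this
    rw [cnt, Finset.sum_sub_distrib, sum_ite_Ico (l := 1) (m := N + 1) hn',
      sum_ite_Ico (l := 0) (m := N + 1) hn']
    · push_cast [Nat.sub_zero, Nat.add_sub_cancel]; ring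
    · intro k
      have hk0 : (0 : ℝ) ≤ k := Nat.cast_nonneg k
      rw [sq_lt_sq_iff hw0, ← ku]
      constructor
      · intro h; exact ⟨Nat.zero_le k, by linarith [h.2]⟩
      · intro h; constructor <;> linarith [h.2]
    · intro k
      rw [sq_lt_sq_iff hw0, ← kv, ← kl]
      constructor
      · intro h; constructor <;> linarith [h.1, h.2]
      · intro h; constructor <;> linarith [h.1, h.2]

theorem necessary_of_pos {u v : ℝ} (h : ∀ s : ℂ, 0 < (s ^ 2).im → (gq u v s).im ≠ 0)
    (h0 : 0 < u - v) (hnonint : ∀ m : ℤ, u - v ≠ m) :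
    u - v < 1 ∧ (0 < u + v ∨ ∃ N : ℕ, u + v = -N) := by
  have hlt : u - v < 1 := by
    by_contra hge
    obtain ⟨n, w, -, -, hw0, hwu, hwv, gu, gv, hc⟩ := exists_large h0 hnonint 0
    have hu : 0 < n + u := by linarith
    have hv : 0 < n + v := by linarith
    have key := abs_cnt_sub_le_one h hu hv (t₁ := -1) (t₂ := w ^ 2)
      (by linarith [sq_nonneg (n + u)]) (by linarith [sq_nonneg (n + v)])
      (pow_lt_pow_left₀ hwu hw0 two_ne_zero) (pow_lt_pow_left₀ hwv hw0 two_ne_zero)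
      (fun k => by linarith [sq_nonneg ((k : ℝ) + u)] |> ne_of_gt)
      (fun k => by linarith [sq_nonneg ((k : ℝ) + v)] |> ne_of_gt) gu gv
    have hz : cnt u v n (-1) = 0 := by
      refine Finset.sum_eq_zero fun k _ => ?_
      rw [if_neg (by linarith [sq_nonneg ((k : ℝ) + v)]),
        if_neg (by linarith [sq_nonneg ((k : ℝ) + u)]), sub_zero]
    have hb : (1 : ℝ) ≤ (⌊u - v⌋₊ : ℝ) := by
      exact_mod_cast Nat.le_floor (by push_cast; linarith : ((1 : ℕ) : ℝ) ≤ u - v)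
    rw [hz, hc] at key
    have := (abs_le.1 key).1
    linarith
  refine ⟨hlt, ?_⟩
  by_contra! hcon
  obtain ⟨hle, hN⟩ := hcon
  have ha : u + v < 0 := lt_of_le_of_ne hle (by simpa using hN 0)
  obtain ⟨w₁, hw₁, gu₁, gv₁, hc₁⟩ := exists_deficit h0 hlt ha hN
  obtain ⟨n, w, hB, hBn, hw0, hwu, hwv, gu, gv, hc⟩ :=
    exists_large h0 hnonint (max w₁ (-(u + v) + 1))
  have hu : 0 < n + u := by linarith
  have hv : 0 < n + v := by linarith
  have hww : w₁ ≤ w := (le_max_left _ _).trans hB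
  have key := abs_cnt_sub_le_one h hu hv (t₁ := w₁ ^ 2) (t₂ := w ^ 2)
    (pow_lt_pow_left₀ (hww.trans_lt hwu) hw₁ two_ne_zero)
    (pow_lt_pow_left₀ (hww.trans_lt hwv) hw₁ two_ne_zero)
    (pow_lt_pow_left₀ hwu hw0 two_ne_zero) (pow_lt_pow_left₀ hwv hw0 two_ne_zero) gu₁ gv₁ gu gv
  rw [hc₁ n ((le_max_right _ _).trans hBn), hc] at key
  have := (abs_le.1 key).1
  have hb : (0 : ℝ) ≤ (⌊u - v⌋₊ : ℝ) := Nat.cast_nonneg _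
  linarith

/-! ### Reduction of `mhat` to the Gamma quotient -/

/-- The real constant in front of the Gamma quotient in `mhat`. -/
noncomputable def pref (α β : ℝ) : ℝ :=
  -(Real.Gamma (1 - β) / ((2 : ℝ) ^ (1 + α + β) * β * Real.Gamma (1 + β)))

theorem mhat_eq (α β : ℝ) (z : ℂ) :
    mhat α β z = (pref α β : ℂ) *
      gq ((1 + α + β) / 2) ((1 + α - β) / 2) (sigmaAB α β z / 2) := by
  have hp : (pref α β : ℂ) = -(Complex.Gamma (1 - (β : ℂ)) /
      ((((2 : ℝ) ^ (1 + α + β) : ℝ) : ℂ) * (β : ℂ) * Complex.Gamma (1 + (β : ℂ)))) := by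
    rw [pref]
    push_cast [← Complex.Gamma_ofReal]
    rfl
  rw [hp, mhat, gq, mul_div_assoc]
  congr 4 <;> push_cast <;> ring

theorem sigma_half_sq (α β : ℝ) (z : ℂ) :
    (sigmaAB α β z / 2) ^ 2 = ((((1 + α + β) / 2) ^ 2 : ℝ) : ℂ) + z := by
  rw [div_pow, sigmaAB, one_div, Complex.cpow_ofNat_inv_pow]
  push_cast; ring

theorem sigma_half_sq_im (α β : ℝ) (z : ℂ) : ((sigmaAB α β z / 2) ^ 2).im = z.im := by
  rw [sigma_half_sq, Complex.add_im, Complex.ofReal_im, zero_add]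

theorem gq_im_ne_zero_of_mhat {α β : ℝ} (h : ∀ z : ℂ, 0 < z.im → 0 < (mhat α β z).im) (s : ℂ)
    (hs : 0 < (s ^ 2).im) : (gq ((1 + α + β) / 2) ((1 + α - β) / 2) s).im ≠ 0 := by
  intro h0
  set z : ℂ := s ^ 2 - ((((1 + α + β) / 2) ^ 2 : ℝ) : ℂ) with hz
  have hzim : 0 < z.im := by rw [hz, Complex.sub_im, Complex.ofReal_im, sub_zero]; exact hs
  have hsq : (sigmaAB α β z / 2) ^ 2 = s ^ 2 := by rw [sigma_half_sq, hz]; ring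
  have hm := h z hzim
  rw [mhat_eq, Complex.im_ofReal_mul] at hm
  rcases sq_eq_sq_iff_eq_or_eq_neg.1 hsq with e | e
  · rw [e, h0, mul_zero] at hm; exact lt_irrefl _ hm
  · rw [e, gq_neg, h0, mul_zero] at hm; exact lt_irrefl _ hm

theorem gq_im_neg_of_cond {u v : ℝ} (ha : 0 < u + v ∨ ∃ N : ℕ, u + v = -N) (h0 : 0 < u - v)
    (h1 : u - v < 1) {s : ℂ} (hs : 0 < (s ^ 2).im) : (gq u v s).im < 0 := by
  rcases ha with ha | ⟨N, ha⟩
  · exact gq_im_neg ha h0 h1 hs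
  · exact gq_im_neg_of_neg_nat ha h0 h1 hs

/-- `m̂_{α,β}` is Nevanlinna–Herglotz iff `α ∈ (-1,∞) ∪ (-ℕ)` and `β ∈ (-1,0) ∪ (0,1)`. -/
theorem mhat_herglotz_iff (α β : ℝ) (hβ : ∀ m : ℤ, β ≠ (m : ℝ)) :
    (∀ z : ℂ, 0 < z.im → 0 < (mhat α β z).im) ↔
      ((-1 < α ∨ ∃ n : ℕ, α = -((n : ℝ) + 1)) ∧
        (β ∈ Set.Ioo (-1 : ℝ) 0 ∨ β ∈ Set.Ioo (0 : ℝ) 1)) := by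
  have hβ0 : β ≠ 0 := by simpa using hβ 0
  set u : ℝ := (1 + α + β) / 2 with hu
  set v : ℝ := (1 + α - β) / 2 with hv
  have hsum : u + v = 1 + α := by rw [hu, hv]; ring
  have hdiff : u - v = β := by rw [hu, hv]; ring
  have hα : (-1 < α ∨ ∃ n : ℕ, α = -((n : ℝ) + 1)) ↔ (0 < u + v ∨ ∃ N : ℕ, u + v = -N) := by
    rw [hsum]
    refine or_congr ⟨fun h => by linarith, fun h => by linarith⟩
      (exists_congr fun n => ⟨fun h => by linarith, fun h => by linarith⟩)
  rw [hα]
  constructor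
  · intro h
    have hne := gq_im_ne_zero_of_mhat h
    rcases lt_or_gt_of_ne hβ0 with hneg | hpos
    · have hne' : ∀ s : ℂ, 0 < (s ^ 2).im → (gq v u s).im ≠ 0 := by
        intro s hs h0
        refine hne s hs ?_
        rw [gq_swap, Complex.inv_im] at h0
        rcases div_eq_zero_iff.1 h0 with h1 | h1
        · exact neg_eq_zero.1 h1
        · exact absurd (Complex.normSq_eq_zero.1 h1) (gq_ne_zero u v hs)
      obtain ⟨h1, h2⟩ := necessary_of_pos hne' (by linarith)
        (fun m hm => hβ (-m) (by push_cast; linarith))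
      rw [add_comm] at h2
      exact ⟨h2, Or.inl ⟨by linarith, hneg⟩⟩
    · obtain ⟨h1, h2⟩ := necessary_of_pos hne (by linarith)
        (fun m hm => hβ m (by linarith))
      exact ⟨h2, Or.inr ⟨hpos, by linarith⟩⟩
  · rintro ⟨ha, hb⟩ z hz
    have hs : 0 < ((sigmaAB α β z / 2) ^ 2).im := by rw [sigma_half_sq_im]; exact hz
    have h2 : (0 : ℝ) < 2 ^ (1 + α + β) := by positivity
    rw [mhat_eq, Complex.im_ofReal_mul]
    rcases hb with ⟨hb1, hb0⟩ | ⟨hb0, hb1⟩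
    · have g1 : 0 < Real.Gamma (1 - β) := Real.Gamma_pos_of_pos (by linarith)
      have g2 : 0 < Real.Gamma (1 + β) := Real.Gamma_pos_of_pos (by linarith)
      refine mul_pos ?_ ?_
      · rw [pref, neg_pos]
        exact div_neg_of_pos_of_neg g1 (mul_neg_of_neg_of_pos (mul_neg_of_pos_of_neg h2 hb0) g2)
      · have := gq_im_neg_of_cond (u := v) (v := u) (by rwa [add_comm]) (by linarith)
          (by linarith) hs
        rw [gq_swap, Complex.inv_im, neg_div, neg_lt_zero] at this
        exact (div_pos_iff_of_pos_right
          (Complex.normSq_pos.2 (gq_ne_zero u v hs))).1 this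
    · have g1 : 0 < Real.Gamma (1 - β) := Real.Gamma_pos_of_pos (by linarith)
      have g2 : 0 < Real.Gamma (1 + β) := Real.Gamma_pos_of_pos (by linarith)
      refine mul_pos_of_neg_of_neg ?_ ?_
      · rw [pref, neg_lt_zero]; positivity
      · exact gq_im_neg_of_cond ha (by linarith) (by linarith) hs
end

section
/- Let α ∈ ℝ and β ∈ (-1,0), and assume α is not a negative integer and α+β is not an integer ≤ -1. Then for every z ∈ ℂ ∖ {n(n+1+α+β) : n ∈ ℕ₀}, the series Σ_{n=0}^∞ (Γ(n+1+α+β) Γ(n+1+β) / (Γ(n+1+α) · n!)) · (2n+1+α+β)/(n(n+1+α+β) - z) converges absolutely, and m̂_{α,β}(z) = (2^{1+α+β} Γ(1+β)^2)^{-1} · Σ_{n=0}^∞ (Γ(n+1+α+β) Γ(n+1+β) / (Γ(n+1+α) · n!)) · (2n+1+α+β)/(n(n+1+α+β) - z). -/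
/-!
Put `s = 1 + α + β` and let `a, b = (s ± σ) / 2`, so that `a + b = s` and
`(n + a) (n + b) = n (n + s) - z`. With `ρ(x) = Γ(x) / Γ(x - β)` (`gammaRatio`) and
`w n = Γ(n + 1 + β) / n!` (`gammaWeight`), the series is
`S(a, b) = ∑ ρ(n + a + b) w n (1 / (n + a) + 1 / (n + b))`, and the claim becomes
`S(a, b) = -(Γ(1 - β) Γ(1 + β) / β) ρ(a) ρ(b)`, a case of Dougall's `₅F₄` summation.

The relation `(a - β) S(a + 1, b) = a S(a, b)` holds because the difference of the summands
telescopes (`symTerm_contiguous`, with the explicit certificate `symCert`). As `ρ` obeys the same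
recurrence and `S` is symmetric, both parameters may be shifted to have real part at least `1`.
There `S(a, b) / ρ(a) = S(a + N, b) / ρ(a + N)` for all `N`, and dominated convergence as `N → ∞`
gives `S(a, b) = ρ(a) H(b)` with `H(b) = ∑ w n / (n + b)` (`tsum_symTerm_eq_limit`). By symmetry
`ρ(1) H(b) = S(1, b) = ρ(b) H(1)`, so `S(a, b) = ρ(a) ρ(b) H(1) / ρ(1)`, and
`H(1) = -Γ(1 + β) / β` is again a telescoping sum, since `w (n + 1) - w n = β w n / (n + 1)`
and `w n → 0` (`tsum_gammaWeight`).
-/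

open Complex

/-- The `n`-th term of the partial fraction expansion of `m̂_{α,β}` for `β ∈ (-1,0)`. -/
noncomputable def mhatTerm (α β : ℝ) (z : ℂ) (n : ℕ) : ℂ :=
  (((Real.Gamma ((n : ℝ) + 1 + α + β) * Real.Gamma ((n : ℝ) + 1 + β) /
      (Real.Gamma ((n : ℝ) + 1 + α) * (n.factorial : ℝ))) : ℝ) : ℂ) *
    (((2 * (n : ℝ) + 1 + α + β : ℝ)) : ℂ) /
      ((n : ℂ) * ((n : ℂ) + 1 + (α : ℂ) + (β : ℂ)) - z)

open Filter Topology

/-- The ratio `Γ(x) / Γ(x - β)`; the value at poles of `Γ(x - β)` is the correct value `0`. -/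
noncomputable def gammaRatio (β : ℝ) (x : ℂ) : ℂ :=
  Complex.Gamma x * (Complex.Gamma (x - β))⁻¹

/-- The weights `Γ(n + 1 + β) / n!`. -/
noncomputable def gammaWeight (β : ℝ) (n : ℕ) : ℝ :=
  Real.Gamma ((n : ℝ) + 1 + β) / (n.factorial : ℝ)

/-- The `n`-th term of the series in the parameters `a`, `b`, the roots of
`(n + a) (n + b) = n (n + 1 + α + β) - z`. -/
noncomputable def symTerm (β : ℝ) (a b : ℂ) (n : ℕ) : ℂ :=
  gammaRatio β (n + (a + b)) * gammaWeight β n * (1 / (n + a) + 1 / (n + b))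

/-! ### The weights `Γ(n + 1 + β) / n!` -/

lemma gammaWeight_pos {β : ℝ} (hβ : -1 < β) (n : ℕ) : 0 < gammaWeight β n := by
  unfold gammaWeight
  have : (0 : ℝ) ≤ n := n.cast_nonneg
  have h1 : 0 < Real.Gamma ((n : ℝ) + 1 + β) := Real.Gamma_pos_of_pos (by linarith)
  positivity

lemma gammaWeight_succ {β : ℝ} (hβ : -1 < β) (n : ℕ) :
    ((n : ℝ) + 1) * gammaWeight β (n + 1) = (n + 1 + β) * gammaWeight β n := by
  unfold gammaWeight
  have : (0 : ℝ) ≤ n := n.cast_nonneg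
  have h1 : ((n + 1 : ℕ) : ℝ) + 1 + β = (n + 1 + β) + 1 := by push_cast; ring
  have h2 : (n.factorial : ℝ) ≠ 0 := by exact_mod_cast n.factorial_ne_zero
  rw [h1, Real.Gamma_add_one (by linarith), Nat.factorial_succ]
  push_cast
  field_simp

lemma gammaWeight_sub {β : ℝ} (hβ : -1 < β) (n : ℕ) :
    gammaWeight β (n + 1) - gammaWeight β n = β * (gammaWeight β n / (n + 1)) := by
  have h := gammaWeight_succ hβ n
  have : (0 : ℝ) < (n : ℝ) + 1 := by positivity
  field_simp
  linarith

lemma sum_gammaWeight {β : ℝ} (hβ : -1 < β) (n : ℕ) :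
    β * ∑ k ∈ Finset.range n, gammaWeight β k / (k + 1) = gammaWeight β n - gammaWeight β 0 := by
  rw [Finset.mul_sum, ← Finset.sum_range_sub]
  exact Finset.sum_congr rfl fun k _ => (gammaWeight_sub hβ k).symm

lemma summable_gammaWeight {β : ℝ} (hβ : -1 < β) (hβ0 : β < 0) :
    Summable fun n : ℕ => gammaWeight β n / ((n : ℝ) + 1) := by
  refine summable_of_sum_range_le (c := gammaWeight β 0 / (-β))
    (fun n => div_nonneg (gammaWeight_pos hβ n).le (by positivity)) fun n => ?_
  rw [le_div_iff₀ (by linarith)]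
  have := sum_gammaWeight hβ n
  have := gammaWeight_pos hβ n
  nlinarith

/-- A positive limit would make `∑ gammaWeight β n / (n + 1)` dominate the harmonic series. -/
lemma tendsto_gammaWeight {β : ℝ} (hβ : -1 < β) (hβ0 : β < 0) :
    Tendsto (gammaWeight β) atTop (𝓝 0) := by
  have hanti : Antitone (gammaWeight β) := by
    refine antitone_nat_of_succ_le fun n => ?_
    have h := gammaWeight_sub hβ n
    have h2 : 0 < gammaWeight β n / ((n : ℝ) + 1) := div_pos (gammaWeight_pos hβ n) (by positivity)
    nlinarith
  have hbdd : BddBelow (Set.range (gammaWeight β)) :=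
    ⟨0, by rintro _ ⟨n, rfl⟩; exact (gammaWeight_pos hβ n).le⟩
  have hlim := tendsto_atTop_ciInf hanti hbdd
  set L := ⨅ i, gammaWeight β i with hL
  have hL0 : 0 ≤ L := le_ciInf fun n => (gammaWeight_pos hβ n).le
  rcases hL0.eq_or_lt with h | h
  · rwa [← h] at hlim
  · exfalso
    have hs : Summable fun n : ℕ => L / ((n : ℝ) + 1) := by
      refine Summable.of_nonneg_of_le (fun n => by positivity) (fun n => ?_)
        (summable_gammaWeight hβ hβ0)
      gcongr
      exact ciInf_le hbdd n
    have hs2 : Summable fun n : ℕ => 1 / (((n + 1 : ℕ) : ℝ)) := by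
      refine (hs.mul_left L⁻¹).congr fun n => ?_
      push_cast
      field_simp
    exact Real.not_summable_one_div_natCast
      ((summable_nat_add_iff (f := fun n : ℕ => 1 / (n : ℝ)) 1).1 hs2)

lemma tsum_gammaWeight {β : ℝ} (hβ : -1 < β) (hβ0 : β < 0) :
    HasSum (fun n : ℕ => gammaWeight β n / ((n : ℝ) + 1)) (-Real.Gamma (1 + β) / β) := by
  have h := (summable_gammaWeight hβ hβ0).hasSum
  have h1 := (h.tendsto_sum_nat).const_mul β
  simp only [sum_gammaWeight hβ] at h1
  have h2 := tendsto_nhds_unique h1 ((tendsto_gammaWeight hβ hβ0).sub_const _)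
  convert h using 1
  rw [div_eq_iff hβ0.ne, mul_comm, h2]
  simp [gammaWeight]

/-! ### The ratio `Γ(x) / Γ(x - β)` -/

lemma gammaRatio_succ (β : ℝ) {x : ℂ} (hx : x ≠ 0) :
    (x - β) * gammaRatio β (x + 1) = x * gammaRatio β x := by
  unfold gammaRatio
  rw [Complex.Gamma_add_one x hx,
    Complex.one_div_Gamma_eq_self_mul_one_div_Gamma_add_one (x - β)]
  ring_nf

lemma sub_ne_zero_of_re_pos {β : ℝ} (hβ0 : β < 0) {x : ℂ} (hx : 0 < x.re) : x - β ≠ 0 := by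
  intro h
  have := congrArg Complex.re h
  simp at this
  linarith

lemma gammaRatio_ne_zero {β : ℝ} (hβ0 : β < 0) {x : ℂ} (hx : 0 < x.re) :
    gammaRatio β x ≠ 0 :=
  mul_ne_zero (Complex.Gamma_ne_zero_of_re_pos hx)
    (inv_ne_zero (Complex.Gamma_ne_zero_of_re_pos (by simp; linarith)))

lemma norm_gammaRatio_succ_le {β : ℝ} (hβ0 : β < 0) {x : ℂ} (hx : 0 < x.re) :
    ‖gammaRatio β (x + 1)‖ ≤ ‖gammaRatio β x‖ := by
  have hx0 : x ≠ 0 := by rintro rfl; simp at hx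
  have h := congrArg norm (gammaRatio_succ β hx0)
  rw [norm_mul, norm_mul] at h
  have hle : ‖x‖ ≤ ‖x - β‖ := by
    rw [Complex.norm_def, Complex.norm_def]
    apply Real.sqrt_le_sqrt
    simp [Complex.normSq_apply]
    nlinarith
  have hpos : 0 < ‖x‖ := norm_pos_iff.2 hx0
  have : ‖x‖ * ‖gammaRatio β (x + 1)‖ ≤ ‖x‖ * ‖gammaRatio β x‖ := by
    rw [← h]; gcongr
  exact le_of_mul_le_mul_left this hpos

lemma norm_gammaRatio_add_nat_le {β : ℝ} (hβ0 : β < 0) {x : ℂ} (hx : 0 < x.re) (n : ℕ) :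
    ‖gammaRatio β (n + x)‖ ≤ ‖gammaRatio β x‖ := by
  induction n with
  | zero => simp
  | succ n ih =>
    refine le_trans ?_ ih
    have h : ((n + 1 : ℕ) : ℂ) + x = (n + x) + 1 := by push_cast; ring
    rw [h]
    exact norm_gammaRatio_succ_le hβ0 (by simp; positivity)

lemma gammaRatio_bounded {β : ℝ} (hβ0 : β < 0) (s : ℂ) :
    ∃ C, 0 ≤ C ∧ ∀ n : ℕ, ‖gammaRatio β (n + s)‖ ≤ C := by
  obtain ⟨N, hN⟩ := exists_nat_gt (-s.re)
  refine ⟨∑ k ∈ Finset.range (N + 1), ‖gammaRatio β (k + s)‖,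
    Finset.sum_nonneg fun _ _ => norm_nonneg _, fun n => ?_⟩
  have key : ∀ k ≤ N, ‖gammaRatio β (k + s)‖ ≤
      ∑ k ∈ Finset.range (N + 1), ‖gammaRatio β (k + s)‖ := fun k hk =>
    Finset.single_le_sum (f := fun k : ℕ => ‖gammaRatio β (k + s)‖)
      (fun _ _ => norm_nonneg _) (Finset.mem_range.2 (by omega))
  rcases le_total n N with h | h
  · exact key n h
  · obtain ⟨m, rfl⟩ := Nat.exists_eq_add_of_le h
    refine le_trans ?_ (key N le_rfl)
    have h2 : ((N + m : ℕ) : ℂ) + s = m + (N + s) := by push_cast; ring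
    rw [h2]
    exact norm_gammaRatio_add_nat_le hβ0 (by simp; linarith) m

/-- Euler's limit formula, as `Γ(N + 1 + x) ~ N ^ x * N!`. -/
lemma tendsto_Gamma_asymp {x : ℂ} (hx : 0 < x.re) :
    Tendsto (fun N : ℕ => Complex.Gamma (N + 1 + x) / ((N : ℂ) ^ x * N.factorial))
      atTop (𝓝 1) := by
  have hG : Complex.Gamma x ≠ 0 := Complex.Gamma_ne_zero_of_re_pos hx
  have hprod : ∀ N : ℕ, ∏ j ∈ Finset.range N, (x + j) = Complex.Gamma (N + x) / Complex.Gamma x := by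
    intro N
    induction N with
    | zero => simp [hG]
    | succ n ih =>
      have hne : (n : ℂ) + x ≠ 0 := by
        intro h
        have := congrArg Complex.re h
        simp at this
        have : (0 : ℝ) ≤ n := n.cast_nonneg
        linarith
      have h : ((n + 1 : ℕ) : ℂ) + x = (n + x) + 1 := by push_cast; ring
      rw [Finset.prod_range_succ, ih, h, Complex.Gamma_add_one _ hne]
      ring
  have h := (Complex.GammaSeq_tendsto_Gamma x).inv₀ hG |>.mul_const (Complex.Gamma x)
  rw [inv_mul_cancel₀ hG] at h
  refine h.congr fun N => ?_
  rw [Complex.GammaSeq, hprod, inv_div, div_right_comm, div_mul_cancel₀ _ hG]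
  push_cast
  ring_nf

lemma tendsto_gammaRatio_asymp {β : ℝ} (hβ0 : β < 0) {x : ℂ} (hx : 0 < x.re) :
    Tendsto (fun N : ℕ => gammaRatio β (N + 1 + x) / (N : ℂ) ^ (β : ℂ)) atTop (𝓝 1) := by
  have h := (tendsto_Gamma_asymp hx).div
    (tendsto_Gamma_asymp (x := x - β) (by simp; linarith)) one_ne_zero
  rw [div_one] at h
  refine h.congr' ?_
  filter_upwards [eventually_gt_atTop 0] with N hN
  have hN0 : (N : ℂ) ≠ 0 := by exact_mod_cast hN.ne'
  have hf : (N.factorial : ℂ) ≠ 0 := by exact_mod_cast N.factorial_ne_zero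
  have hp : (N : ℂ) ^ x ≠ 0 := by simp [Complex.cpow_eq_zero_iff, hN0]
  have hp2 : (N : ℂ) ^ (β : ℂ) ≠ 0 := by simp [Complex.cpow_eq_zero_iff, hN0]
  simp only [Pi.div_apply, gammaRatio]
  rw [Complex.cpow_sub _ _ hN0, ← add_sub_assoc]
  field_simp

/-- `Γ(x) / Γ(x - β)` behaves like `x ^ β`, so bounded translations do not matter at infinity. -/
lemma tendsto_gammaRatio_div {β : ℝ} (hβ0 : β < 0) {x y : ℂ} (hx : 0 < x.re) (hy : 0 < y.re) :
    Tendsto (fun N : ℕ => gammaRatio β (N + 1 + x) / gammaRatio β (N + 1 + y)) atTop (𝓝 1) := by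
  have h := (tendsto_gammaRatio_asymp hβ0 hx).div (tendsto_gammaRatio_asymp hβ0 hy) one_ne_zero
  rw [div_one] at h
  refine h.congr' ?_
  filter_upwards [eventually_gt_atTop 0] with N hN
  have hN0 : (N : ℂ) ≠ 0 := by exact_mod_cast hN.ne'
  have hp2 : (N : ℂ) ^ (β : ℂ) ≠ 0 := by simp [Complex.cpow_eq_zero_iff, hN0]
  simp only [Pi.div_apply]
  exact div_div_div_cancel_right₀ hp2 _ _

/-! ### The symmetric series and its contiguity relation -/

lemma symTerm_comm (β : ℝ) (a b : ℂ) : symTerm β a b = symTerm β b a := by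
  funext n
  simp only [symTerm, add_comm]

lemma norm_inv_nat_add_bounded (a : ℂ) :
    ∃ C, 0 ≤ C ∧ ∀ n : ℕ, ‖1 / ((n : ℂ) + a)‖ ≤ C / ((n : ℝ) + 1) := by
  have h := tendsto_add_mul_div_add_mul_atTop_nhds (𝕜 := ℂ) 1 a 1 (d := 1) one_ne_zero
  obtain ⟨C, hC⟩ := (Metric.isBounded_range_of_tendsto _ h).exists_norm_le
  refine ⟨max C 0, le_max_right _ _, fun n => ?_⟩
  have hn := hC _ ⟨n, rfl⟩
  have hpos : (0 : ℝ) < (n : ℝ) + 1 := by positivity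
  have hnorm : ‖(1 + 1 * (n : ℂ))‖ = (n : ℝ) + 1 := by
    have : (1 + 1 * (n : ℂ)) = (((n : ℝ) + 1 : ℝ) : ℂ) := by push_cast; ring
    rw [this, Complex.norm_real, Real.norm_of_nonneg hpos.le]
  rw [norm_div, hnorm, one_mul, add_comm a] at hn
  rw [norm_div, norm_one, le_div_iff₀ hpos]
  calc 1 / ‖(n : ℂ) + a‖ * ((n : ℝ) + 1) = ((n : ℝ) + 1) / ‖(n : ℂ) + a‖ := by ring
    _ ≤ C := hn
    _ ≤ _ := le_max_left _ _

lemma summable_norm_symTerm {β : ℝ} (hβ : -1 < β) (hβ0 : β < 0) (a b : ℂ) :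
    Summable fun n => ‖symTerm β a b n‖ := by
  obtain ⟨C, hC, hC'⟩ := gammaRatio_bounded hβ0 (a + b)
  obtain ⟨A, hA, hA'⟩ := norm_inv_nat_add_bounded a
  obtain ⟨B, hB, hB'⟩ := norm_inv_nat_add_bounded b
  refine Summable.of_nonneg_of_le (fun _ => norm_nonneg _) (fun n => ?_)
    ((summable_gammaWeight hβ hβ0).mul_left (C * (A + B)))
  have hw := gammaWeight_pos hβ n
  rw [symTerm, norm_mul, norm_mul, Complex.norm_real, Real.norm_of_nonneg hw.le]
  calc _ ≤ C * gammaWeight β n * (A / (n + 1) + B / (n + 1)) := by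
        gcongr
        · exact hC' n
        · exact (norm_add_le _ _).trans (add_le_add (hA' n) (hB' n))
    _ = _ := by ring

/-- The telescoping certificate for the contiguity relation in the first parameter. -/
noncomputable def symCert (β : ℝ) (a b : ℂ) (n : ℕ) : ℂ :=
  -(gammaRatio β (n + (a + b)) * gammaWeight β n * (n / (n + a)))

lemma tendsto_symCert {β : ℝ} (hβ : -1 < β) (hβ0 : β < 0) (a b : ℂ) :
    Tendsto (symCert β a b) atTop (𝓝 0) := by
  obtain ⟨C, hC, hC'⟩ := gammaRatio_bounded hβ0 (a + b)
  obtain ⟨A, hA, hA'⟩ := norm_inv_nat_add_bounded a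
  have h := (tendsto_gammaWeight hβ hβ0).const_mul (C * A)
  rw [mul_zero] at h
  refine squeeze_zero_norm (fun n => ?_) h
  have hw := gammaWeight_pos hβ n
  rw [symCert, norm_neg, norm_mul, norm_mul, Complex.norm_real, Real.norm_of_nonneg hw.le]
  have h2 : ‖(n : ℂ) / (n + a)‖ ≤ A := by
    have hpos : (0 : ℝ) < (n : ℝ) + 1 := by positivity
    have h3 := hA' n
    rw [norm_div, norm_one, le_div_iff₀ hpos] at h3
    rw [norm_div, Complex.norm_natCast]
    have h4 : 0 ≤ 1 / ‖(n : ℂ) + a‖ := by positivity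
    calc (n : ℝ) / ‖(n : ℂ) + a‖ = 1 / ‖(n : ℂ) + a‖ * n := by ring
      _ ≤ 1 / ‖(n : ℂ) + a‖ * (n + 1) := by gcongr; linarith
      _ ≤ A := h3
  calc _ ≤ C * gammaWeight β n * A := by
        gcongr
        exact hC' n
    _ = _ := by ring

lemma symTerm_contiguous {β : ℝ} (hβ : -1 < β) {a b : ℂ} (ha : ∀ n : ℕ, (n : ℂ) + a ≠ 0)
    (hb : ∀ n : ℕ, (n : ℂ) + b ≠ 0) (hs : ∀ n : ℕ, (n : ℂ) + (a + b) ≠ 0) (n : ℕ) :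
    (a - β) * symTerm β (a + 1) b n - a * symTerm β a b n =
      symCert β a b (n + 1) - symCert β a b n := by
  -- The common factor `Γ(n + s) / Γ(n + s + 1 - β)`, where `s = a + b`.
  obtain ⟨U, h1, h2⟩ : ∃ U : ℂ, gammaRatio β (n + (a + b)) = (n + (a + b) - β) * U ∧
      gammaRatio β (n + (a + b) + 1) = (n + (a + b)) * U := by
    refine ⟨Complex.Gamma (n + (a + b)) * (Complex.Gamma (n + (a + b) - β + 1))⁻¹, ?_, ?_⟩
    · rw [gammaRatio, Complex.one_div_Gamma_eq_self_mul_one_div_Gamma_add_one]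
      ring
    · rw [gammaRatio, Complex.Gamma_add_one _ (hs n)]
      ring_nf
  have hw : ((n : ℂ) + 1) * (gammaWeight β (n + 1) : ℂ) = (n + 1 + β) * gammaWeight β n := by
    exact_mod_cast congrArg (fun r : ℝ => (r : ℂ)) (gammaWeight_succ hβ n)
  have ha0 := ha n
  have ha1 : (n : ℂ) + 1 + a ≠ 0 := by simpa using ha (n + 1)
  have hb0 := hb n
  have hG : symCert β a b (n + 1) =
      -((n + (a + b)) * U * ((n + 1 + β) * gammaWeight β n) / (n + 1 + a)) := by
    rw [← hw, ← h2, symCert]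
    push_cast
    rw [show (n : ℂ) + 1 + (a + b) = n + (a + b) + 1 by ring]
    ring
  rw [hG, symCert, symTerm, symTerm, h1,
    show (n : ℂ) + (a + 1 + b) = n + (a + b) + 1 by ring, h2,
    show (n : ℂ) + (a + 1) = n + 1 + a by ring]
  field_simp
  ring

lemma tsum_symTerm_contiguous {β : ℝ} (hβ : -1 < β) (hβ0 : β < 0) {a b : ℂ}
    (ha : ∀ n : ℕ, (n : ℂ) + a ≠ 0) (hb : ∀ n : ℕ, (n : ℂ) + b ≠ 0)
    (hs : ∀ n : ℕ, (n : ℂ) + (a + b) ≠ 0) :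
    (a - β) * ∑' n, symTerm β (a + 1) b n = a * ∑' n, symTerm β a b n := by
  have h1 := (summable_norm_symTerm hβ hβ0 (a + 1) b).of_norm.hasSum.mul_left (a - β)
  have h2 := (summable_norm_symTerm hβ hβ0 a b).of_norm.hasSum.mul_left a
  have h3 := (h1.sub h2).tendsto_sum_nat
  simp only [symTerm_contiguous hβ ha hb hs, Finset.sum_range_sub] at h3
  have h4 := (tendsto_symCert hβ hβ0 a b).sub_const (symCert β a b 0)
  have h0 : symCert β a b 0 = 0 := by simp [symCert]
  rw [h0, sub_zero] at h4
  rw [h0] at h3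
  simp only [sub_zero] at h3 h4
  exact sub_eq_zero.1 (tendsto_nhds_unique h3 h4)

/-! ### Evaluation of the symmetric series -/

lemma nat_add_ne_zero_of_re_pos {x : ℂ} (hx : 0 < x.re) (n : ℕ) : (n : ℂ) + x ≠ 0 := by
  intro h
  have := congrArg Complex.re h
  simp at this
  have : (0 : ℝ) ≤ n := n.cast_nonneg
  linarith

lemma tsum_symTerm_shift {β : ℝ} (hβ : -1 < β) (hβ0 : β < 0) {a b : ℂ}
    (ha : 0 < a.re) (hb : 0 < b.re) (N : ℕ) :
    (∑' n, symTerm β a b n) / gammaRatio β a =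
      (∑' n, symTerm β (N + a) b n) / gammaRatio β (N + a) := by
  induction N with
  | zero => simp
  | succ N ih =>
    have hre : 0 < ((N : ℂ) + a).re := by simp; positivity
    have h := tsum_symTerm_contiguous hβ hβ0 (nat_add_ne_zero_of_re_pos hre)
      (nat_add_ne_zero_of_re_pos hb)
      (nat_add_ne_zero_of_re_pos (x := N + a + b) (by rw [Complex.add_re]; positivity))
    have hne : (N : ℂ) + a ≠ 0 := nat_add_ne_zero_of_re_pos ha N
    have h2 := gammaRatio_succ β hne
    rw [ih, show ((N + 1 : ℕ) : ℂ) + a = N + a + 1 by push_cast; ring,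
      div_eq_div_iff (gammaRatio_ne_zero hβ0 hre)
        (gammaRatio_ne_zero hβ0 (by rw [Complex.add_re, Complex.one_re]; positivity))]
    have h3 := sub_ne_zero_of_re_pos hβ0 hre
    apply mul_left_cancel₀ (mul_ne_zero h3 hne)
    linear_combination (N + a) * (∑' n, symTerm β (N + a) b n) * h2 -
      (N + a) * gammaRatio β (N + a) * h

lemma norm_inv_nat_add_le {x : ℂ} (hx : 1 ≤ x.re) (n : ℕ) :
    ‖1 / ((n : ℂ) + x)‖ ≤ 1 / ((n : ℝ) + 1) := by
  rw [norm_div, norm_one]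
  apply one_div_le_one_div_of_le (by positivity)
  refine le_trans ?_ (Complex.re_le_norm _)
  simp
  exact hx

/-- Sending `a` to infinity along `a + ℕ` separates the two parameters. -/
lemma tsum_symTerm_eq_limit {β : ℝ} (hβ : -1 < β) (hβ0 : β < 0) {a b : ℂ}
    (ha : 1 ≤ a.re) (hb : 1 ≤ b.re) :
    ∑' n, symTerm β a b n =
      gammaRatio β a * ∑' n : ℕ, (gammaWeight β n : ℂ) * (1 / ((n : ℂ) + b)) := by
  have ha0 : 0 < a.re := by linarith
  have hb0 : 0 < b.re := by linarith
  have hab : 0 < (a + b).re := by rw [Complex.add_re]; linarith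
  have hratio := tendsto_gammaRatio_div hβ0 hab ha0
  have hbound : ∀ᶠ N : ℕ in atTop,
      ‖gammaRatio β (N + 1 + (a + b)) / gammaRatio β (N + 1 + a)‖ ≤ 2 := by
    have := hratio.norm.eventually_le_const (u := 2) (by simp)
    exact this
  have hlim : Tendsto (fun N : ℕ => ∑' n, symTerm β (N + 1 + a) b n / gammaRatio β (N + 1 + a))
      atTop (𝓝 (∑' n : ℕ, (gammaWeight β n : ℂ) * (1 / ((n : ℂ) + b)))) := by
    refine tendsto_tsum_of_dominated_convergence
      (bound := fun n => 4 * (gammaWeight β n / ((n : ℝ) + 1)))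
      ((summable_gammaWeight hβ hβ0).mul_left 4) (fun n => ?_) ?_
    · have h1 : Tendsto (fun N : ℕ => 1 / ((n : ℂ) + (N + 1 + a))) atTop (𝓝 0) := by
        refine squeeze_zero_norm (a := fun N : ℕ => 1 / ((N : ℝ) + 1)) (fun N => ?_)
          tendsto_one_div_add_atTop_nhds_zero_nat
        have := norm_inv_nat_add_le (x := n + 1 + a) (by simp; linarith [(n.cast_nonneg : (0 : ℝ) ≤ n)]) N
        rwa [show (n : ℂ) + (N + 1 + a) = N + (n + 1 + a) by ring]
      have h2 := tendsto_gammaRatio_div hβ0 (x := n + (a + b)) (y := a)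
        (by rw [Complex.add_re, Complex.natCast_re]; positivity) ha0
      have h3 := (h2.mul_const (gammaWeight β n : ℂ)).mul (h1.add_const (1 / ((n : ℂ) + b)))
      rw [one_mul, zero_add] at h3
      refine h3.congr fun N => ?_
      rw [symTerm, show (n : ℂ) + (N + 1 + a + b) = N + 1 + (n + (a + b)) by ring]
      ring
    · filter_upwards [hbound] with N hN n
      have hw := gammaWeight_pos hβ n
      have hre : 0 < ((N : ℂ) + 1 + (a + b)).re := by
        simp only [Complex.add_re, Complex.natCast_re, Complex.one_re]
        positivity
      have hre2 : 1 ≤ ((N : ℂ) + 1 + a).re := by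
        simp only [Complex.add_re, Complex.natCast_re, Complex.one_re]
        have : (0 : ℝ) ≤ N := N.cast_nonneg
        linarith
      have h1 : ‖gammaRatio β (n + (N + 1 + (a + b))) / gammaRatio β (N + 1 + a)‖ ≤ 2 := by
        refine le_trans ?_ hN
        rw [norm_div, norm_div]
        gcongr
        exact norm_gammaRatio_add_nat_le hβ0 hre n
      rw [symTerm, show (n : ℂ) + (N + 1 + a + b) = n + (N + 1 + (a + b)) by ring,
        mul_assoc, mul_div_right_comm, norm_mul, norm_mul, Complex.norm_real,
        Real.norm_of_nonneg hw.le]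
      calc _ ≤ 2 * (gammaWeight β n * (1 / ((n : ℝ) + 1) + 1 / ((n : ℝ) + 1))) := by
            gcongr
            exact (norm_add_le _ _).trans
              (add_le_add (norm_inv_nat_add_le hre2 n) (norm_inv_nat_add_le hb n))
        _ = _ := by ring
  have hconst : ∀ N : ℕ, ∑' n, symTerm β (N + 1 + a) b n / gammaRatio β (N + 1 + a) =
      (∑' n, symTerm β a b n) / gammaRatio β a := by
    intro N
    rw [tsum_div_const, tsum_symTerm_shift hβ hβ0 ha0 hb0 (N + 1)]
    push_cast
    rfl
  simp only [hconst] at hlim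
  have h := tendsto_nhds_unique tendsto_const_nhds hlim
  rw [div_eq_iff (gammaRatio_ne_zero hβ0 ha0)] at h
  rw [h, mul_comm]

lemma tsum_symTerm_of_one_le_re {β : ℝ} (hβ : -1 < β) (hβ0 : β < 0) {a b : ℂ}
    (ha : 1 ≤ a.re) (hb : 1 ≤ b.re) :
    ∑' n, symTerm β a b n =
      -(Complex.Gamma (1 - β) * Complex.Gamma (1 + β) / β) *
        (gammaRatio β a * gammaRatio β b) := by
  have hone : (1 : ℝ) ≤ (1 : ℂ).re := by simp
  have h1 := tsum_symTerm_eq_limit hβ hβ0 hone hb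
  have h2 := tsum_symTerm_eq_limit hβ hβ0 hb hone
  have hH : ∑' n : ℕ, (gammaWeight β n : ℂ) * (1 / ((n : ℂ) + 1)) =
      -Complex.Gamma (1 + β) / β := by
    have h := Complex.hasSum_ofReal.2 (tsum_gammaWeight hβ hβ0)
    have h' := h.tsum_eq
    push_cast [← Complex.Gamma_ofReal] at h'
    rw [← h']
    simp only [mul_one_div]
  have hG : Complex.Gamma (1 - β) ≠ 0 := Complex.Gamma_ne_zero_of_re_pos (by simp; linarith)
  have hr1 : gammaRatio β 1 = (Complex.Gamma (1 - β))⁻¹ := by simp [gammaRatio]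
  -- The value at `(1, b)`, computed by sending either parameter to infinity.
  rw [symTerm_comm, h2, hH, hr1] at h1
  have h3 : ∑' n : ℕ, (gammaWeight β n : ℂ) * (1 / ((n : ℂ) + b)) =
      Complex.Gamma (1 - β) * (gammaRatio β b * (-Complex.Gamma (1 + β) / β)) := by
    rw [h1, mul_inv_cancel_left₀ hG]
  rw [tsum_symTerm_eq_limit hβ hβ0 ha hb, h3]
  ring

lemma tsum_symTerm_of_succ {β : ℝ} (hβ : -1 < β) (hβ0 : β < 0) {a b : ℂ}
    (ha : ∀ n : ℕ, (n : ℂ) + a ≠ 0) (hb : ∀ n : ℕ, (n : ℂ) + b ≠ 0)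
    (hs : ∀ n : ℕ, (n : ℂ) + (a + b) ≠ 0) {c : ℂ}
    (h : ∑' n, symTerm β (a + 1) b n = c * (gammaRatio β (a + 1) * gammaRatio β b)) :
    ∑' n, symTerm β a b n = c * (gammaRatio β a * gammaRatio β b) := by
  have ha0 : a ≠ 0 := by simpa using ha 0
  have h1 := tsum_symTerm_contiguous hβ hβ0 ha hb hs
  have h2 := gammaRatio_succ β ha0
  apply mul_left_cancel₀ ha0
  rw [h] at h1
  linear_combination -h1 + c * gammaRatio β b * h2

lemma tsum_symTerm_of_add_nat {β : ℝ} (hβ : -1 < β) (hβ0 : β < 0) {b c : ℂ}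
    (hb : ∀ n : ℕ, (n : ℂ) + b ≠ 0) (N : ℕ) {a : ℂ}
    (ha : ∀ n : ℕ, (n : ℂ) + a ≠ 0) (hs : ∀ n : ℕ, (n : ℂ) + (a + b) ≠ 0)
    (h : ∑' n, symTerm β (a + N) b n = c * (gammaRatio β (a + N) * gammaRatio β b)) :
    ∑' n, symTerm β a b n = c * (gammaRatio β a * gammaRatio β b) := by
  induction N generalizing a with
  | zero => simpa using h
  | succ N ih =>
    refine tsum_symTerm_of_succ hβ hβ0 ha hb hs (ih (fun n => ?_) (fun n => ?_) ?_)
    · have := ha (n + 1)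
      push_cast at this
      rwa [add_assoc, add_comm 1 a] at this
    · have := hs (n + 1)
      push_cast at this
      rwa [show (n : ℂ) + (a + 1 + b) = n + 1 + (a + b) by ring]
    · push_cast at h
      rwa [show a + 1 + (N : ℂ) = a + (N + 1) by ring]

/-- The special case of Dougall's `₅F₄` summation behind the expansion. -/
lemma tsum_symTerm {β : ℝ} (hβ : -1 < β) (hβ0 : β < 0) {a b : ℂ}
    (ha : ∀ n : ℕ, (n : ℂ) + a ≠ 0) (hb : ∀ n : ℕ, (n : ℂ) + b ≠ 0)
    (hs : ∀ n : ℕ, (n : ℂ) + (a + b) ≠ 0) :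
    ∑' n, symTerm β a b n =
      -(Complex.Gamma (1 - β) * Complex.Gamma (1 + β) / β) *
        (gammaRatio β a * gammaRatio β b) := by
  obtain ⟨N, hN⟩ := exists_nat_ge (1 - a.re)
  obtain ⟨M, hM⟩ := exists_nat_ge (1 - b.re)
  have haN : 1 ≤ (a + N).re := by simp; linarith
  have hbM : 1 ≤ (b + M).re := by simp; linarith
  refine tsum_symTerm_of_add_nat hβ hβ0 hb N ha hs ?_
  have hs' : ∀ n : ℕ, (n : ℂ) + (b + (a + N)) ≠ 0 := fun n => by
    have := hs (n + N)
    push_cast at this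
    rwa [show (n : ℂ) + (b + (a + N)) = n + N + (a + b) by ring]
  have h := tsum_symTerm_of_add_nat hβ hβ0
    (nat_add_ne_zero_of_re_pos (zero_lt_one.trans_le haN)) M hb hs'
    (tsum_symTerm_of_one_le_re hβ hβ0 hbM haN)
  rw [symTerm_comm, h, mul_comm (gammaRatio β b)]

/-! ### The partial fraction expansion -/

/-- Partial fraction (Mittag-Leffler type) expansion of `m̂_{α,β}` for `β ∈ (-1,0)`. -/
theorem mhat_partial_fraction (α β : ℝ)
    (hα : ∀ n : ℕ, α ≠ -((n : ℝ) + 1))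
    (hαβ : ∀ m : ℤ, m ≤ -1 → α + β ≠ (m : ℝ))
    (hβ : β ∈ Set.Ioo (-1 : ℝ) 0)
    (z : ℂ) (hz : ∀ n : ℕ, z ≠ (n : ℂ) * ((n : ℂ) + 1 + (α : ℂ) + (β : ℂ))) :
    Summable (fun n : ℕ => ‖mhatTerm α β z n‖) ∧
      mhat α β z =
        ((((2 : ℝ) ^ (1 + α + β) * Real.Gamma (1 + β) ^ 2 : ℝ)) : ℂ)⁻¹ *
          ∑' n : ℕ, mhatTerm α β z n := by
  obtain ⟨hβ1, hβ0⟩ := hβ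
  set σ := sigmaAB α β z with hσ
  have hσ2 : σ ^ 2 = (1 + α + β : ℂ) ^ 2 + 4 * z := by
    rw [hσ, sigmaAB, ← Complex.cpow_nat_mul]
    norm_num
  obtain ⟨a, haσ⟩ : ∃ a : ℂ, a = (1 + α + β + σ) / 2 := ⟨_, rfl⟩
  obtain ⟨b, hbσ⟩ : ∃ b : ℂ, b = (1 + α + β - σ) / 2 := ⟨_, rfl⟩
  have hsum : a + b = 1 + α + β := by rw [haσ, hbσ]; ring
  have hprod : ∀ n : ℕ, ((n : ℂ) + a) * (n + b) = n * (n + 1 + α + β) - z := by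
    intro n
    rw [haσ, hbσ]
    linear_combination -(1 / 4 : ℂ) * hσ2
  have hne : ∀ n : ℕ, ((n : ℂ) + a) * (n + b) ≠ 0 := fun n h => by
    rw [hprod, sub_eq_zero] at h
    exact hz n h.symm
  have ha : ∀ n : ℕ, (n : ℂ) + a ≠ 0 := fun n => left_ne_zero_of_mul (hne n)
  have hb : ∀ n : ℕ, (n : ℂ) + b ≠ 0 := fun n => right_ne_zero_of_mul (hne n)
  have hs : ∀ n : ℕ, (n : ℂ) + (a + b) ≠ 0 := fun n h => by
    rw [hsum] at h
    have h' : (n : ℝ) + (1 + α + β) = 0 := by exact_mod_cast h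
    refine hαβ (-(n + 1)) (by omega) ?_
    push_cast
    linarith
  have hterm : mhatTerm α β z = symTerm β a b := by
    funext n
    have h1 : ((n : ℂ) + (1 + α + β)) = (((n : ℝ) + 1 + α + β : ℝ) : ℂ) := by push_cast; ring
    have h2 : ((n : ℂ) + (1 + α + β)) - β = (((n : ℝ) + 1 + α : ℝ) : ℂ) := by push_cast; ring
    have h3 : 1 / ((n : ℂ) + a) + 1 / (n + b) =
        ((2 * (n : ℝ) + 1 + α + β : ℝ) : ℂ) / (n * (n + 1 + α + β) - z) := by
      rw [← hprod n, div_add_div _ _ (ha n) (hb n)]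
      congr 1
      push_cast
      linear_combination hsum
    rw [mhatTerm, symTerm, gammaRatio, gammaWeight, hsum, h3, h2, h1, Complex.Gamma_ofReal,
      Complex.Gamma_ofReal]
    push_cast
    ring
  refine ⟨by rw [hterm]; exact summable_norm_symTerm hβ1 hβ0 a b, ?_⟩
  have hG : Complex.Gamma (1 + β) ≠ 0 := Complex.Gamma_ne_zero_of_re_pos (by simp; linarith)
  rw [hterm, tsum_symTerm hβ1 hβ0 ha hb hs, mhat, ← hσ, ← haσ, ← hbσ,
    show (1 + (α : ℂ) - β + σ) / 2 = a - β by rw [haσ]; ring,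
    show (1 + (α : ℂ) - β - σ) / 2 = b - β by rw [hbσ]; ring, gammaRatio, gammaRatio,
    Complex.ofReal_mul, Complex.ofReal_pow, ← Complex.Gamma_ofReal, Complex.ofReal_add,
    Complex.ofReal_one]
  rw [div_eq_mul_inv, mul_inv, mul_inv]
  have hpow : (((2 : ℝ) ^ (1 + α + β) : ℝ) : ℂ) ≠ 0 := by
    exact_mod_cast (Real.rpow_pos_of_pos two_pos _).ne'
  have hβc : (β : ℂ) ≠ 0 := by exact_mod_cast hβ0.ne
  field_simp
end

section
/- Let α ∈ (-1,∞), β ∈ (-1,1)∖{0}, and for t ∈ ℝ write z_t = t(t+1+α+β). Then for every z ∈ ℂ with z ∉ {z_n : n ∈ ℕ₀} (in particular z ≠ 0, since z_0 = 0), the infinite product ∏_{n=1}^∞ (1 - z/z_{n-β})/(1 - z/z_n) converges, and m̂_{α,β}(z) = -(Γ(2+α+β)/(2^{1+α+β} β Γ(1+β) Γ(2+α))) · ((z - z_{-β})/z) · ∏_{n=1}^∞ (1 - z/z_{n-β})/(1 - z/z_n). -/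
/-!
Put `p, q = (1+α+β±σ)/2` and `r, s = p-β, q-β`. Since `p + q = 1+α+β` and `pq = -z`,
one has `z_n - z = (p+n)(q+n)` and `z_{n-β} - z = (r+n)(s+n)`, while
`z_n = n (n+1+α+β)` and `z_{n-β} = (n-β)(n+1+α)`. So every factor of the product is a quotient
of eight linear factors in `n`, and its partial products are *exactly* the quotient of the
Euler sequences `GammaSeq` at `p+1, q+1, 1-β, 2+α` over those at `r+1, s+1, 1, 2+α+β`
(`GammaSeq_quotient`): the two quadruples have equal sums, so the powers of `n` cancel.
Euler's limit formula then evaluates the product, and `Γ(x+1) = x Γ(x)` turns the shifted Gamma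
values into those of `m̂`. Convergence is absolute, each factor being `1 + O(1/n²)`.
If some factor vanishes, then one of `r+1, s+1` is a pole of `Γ`, and both sides are zero.
-/

open Complex

/-- `z_t = t(t+1+α+β)`. -/
noncomputable def zt (α β t : ℝ) : ℝ := t * (t + 1 + α + β)

open Filter Topology

lemma sigmaAB_sq (α β : ℝ) (z : ℂ) :
    sigmaAB α β z ^ 2 = (1 + (α : ℂ) + β) ^ 2 + 4 * z := by
  unfold sigmaAB
  rw [← Complex.cpow_nat_mul]
  norm_num

/-- If two quadruples have the same sum, the powers of `n` in the quotient of their Euler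
sequences cancel, leaving a finite product of rational functions. -/
lemma GammaSeq_quotient (x₁ x₂ x₃ x₄ y₁ y₂ y₃ y₄ : ℂ)
    (h : x₁ + x₂ + x₃ + x₄ = y₁ + y₂ + y₃ + y₄) {n : ℕ} (hn : n ≠ 0) :
    (GammaSeq x₁ n * GammaSeq x₂ n * GammaSeq x₃ n * GammaSeq x₄ n) /
      (GammaSeq y₁ n * GammaSeq y₂ n * GammaSeq y₃ n * GammaSeq y₄ n) =
    ∏ j ∈ Finset.range (n + 1), ((y₁ + j) * (y₂ + j) * (y₃ + j) * (y₄ + j)) /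
      ((x₁ + j) * (x₂ + j) * (x₃ + j) * (x₄ + j)) := by
  have hn' : (n : ℂ) ≠ 0 := by exact_mod_cast hn
  have key : (n : ℂ) ^ x₁ * (n : ℂ) ^ x₂ * (n : ℂ) ^ x₃ * (n : ℂ) ^ x₄ =
      (n : ℂ) ^ y₁ * (n : ℂ) ^ y₂ * (n : ℂ) ^ y₃ * (n : ℂ) ^ y₄ := by
    simp only [← Complex.cpow_add _ _ hn', h]
  have hne : (n : ℂ) ^ y₁ * (n : ℂ) ^ y₂ * (n : ℂ) ^ y₃ * (n : ℂ) ^ y₄ ≠ 0 := by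
    simp [Complex.cpow_eq_zero_iff, hn']
  have hf : (n.factorial : ℂ) ≠ 0 := by exact_mod_cast n.factorial_ne_zero
  simp only [GammaSeq, Finset.prod_div_distrib, Finset.prod_mul_distrib]
  generalize ∏ j ∈ Finset.range (n + 1), (x₁ + (j : ℂ)) = X₁
  generalize ∏ j ∈ Finset.range (n + 1), (x₂ + (j : ℂ)) = X₂
  generalize ∏ j ∈ Finset.range (n + 1), (x₃ + (j : ℂ)) = X₃
  generalize ∏ j ∈ Finset.range (n + 1), (x₄ + (j : ℂ)) = X₄
  generalize ∏ j ∈ Finset.range (n + 1), (y₁ + (j : ℂ)) = Y₁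
  generalize ∏ j ∈ Finset.range (n + 1), (y₂ + (j : ℂ)) = Y₂
  generalize ∏ j ∈ Finset.range (n + 1), (y₃ + (j : ℂ)) = Y₃
  generalize ∏ j ∈ Finset.range (n + 1), (y₄ + (j : ℂ)) = Y₄
  simp only [div_mul_div_comm]
  have e : ∀ a b c d : ℂ, a * n.factorial * (b * n.factorial) * (c * n.factorial) *
      (d * n.factorial) = (a * b * c * d) * (n.factorial : ℂ) ^ 4 := by intros; ring
  rw [e, e, key, div_div_div_eq, mul_comm (X₁ * X₂ * X₃ * X₄),
    mul_div_mul_left _ _ (mul_ne_zero hne (pow_ne_zero 4 hf))]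

/-- Quadratic growth of the `a n`, `b n` makes the quotients `1 + O(1/n²)`. -/
lemma multipliable_quotient (a b : ℕ → ℝ) (ha : ∀ n : ℕ, (n : ℝ) ^ 2 ≤ a n)
    (hb : ∀ n : ℕ, (n : ℝ) ^ 2 ≤ b n) (z : ℂ) (hz : ∀ n, 1 - z / (b n : ℂ) ≠ 0) :
    Multipliable fun n => (1 - z / (a n : ℂ)) / (1 - z / (b n : ℂ)) := by
  have hsum : ∀ c : ℕ → ℝ, (∀ n : ℕ, (n : ℝ) ^ 2 ≤ c n) →
      Summable fun n => ‖z / (c n : ℂ)‖ := by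
    intro c hc
    have h2 : Summable fun n : ℕ => ‖z‖ * ((n : ℝ) ^ 2)⁻¹ :=
      (Real.summable_nat_pow_inv.2 (by norm_num)).mul_left _
    refine h2.of_norm_bounded_eventually_nat ?_
    filter_upwards [eventually_gt_atTop 0] with n hn
    have hn' : (0 : ℝ) < (n : ℝ) ^ 2 := by positivity
    have hcn : 0 < c n := hn'.trans_le (hc n)
    rw [norm_norm, norm_div, Complex.norm_real, Real.norm_of_nonneg hcn.le, div_eq_mul_inv]
    gcongr
    exact hc n
  have hA := hsum a ha
  have hB := hsum b hb
  have hlim : Tendsto (fun n => (1 - z / (b n : ℂ))⁻¹) atTop (𝓝 ((1 - 0)⁻¹)) :=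
    (tendsto_const_nhds.sub
      (tendsto_zero_iff_norm_tendsto_zero.2 hB.tendsto_atTop_zero)).inv₀ (by norm_num)
  have hdiff : (fun n => (z / (b n : ℂ) - z / (a n : ℂ)) * (1 - z / (b n : ℂ))⁻¹) =O[atTop]
      fun n => (‖z / (b n : ℂ)‖ + ‖z / (a n : ℂ)‖) * (1 : ℝ) := by
    refine Asymptotics.IsBigO.mul ?_ (hlim.isBigO_one ℝ)
    refine Asymptotics.IsBigO.of_bound 1 (Eventually.of_forall fun n => ?_)
    rw [one_mul, Real.norm_of_nonneg (by positivity)]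
    exact norm_sub_le _ _
  have hs := summable_of_isBigO_nat (by simpa using hB.add hA) hdiff.norm_left
  refine (multipliable_one_add_of_summable hs).congr fun n => ?_
  have := hz n
  field_simp
  ring

/-- Hadamard-type product formula for `m̂_{α,β}` with `α ∈ (-1,∞)`, `β ∈ (-1,1) \ {0}`. -/
theorem mhat_hadamard_product (α β : ℝ) (hα : -1 < α)
    (hβ : β ∈ Set.Ioo (-1 : ℝ) 1) (hβ0 : β ≠ 0)
    (z : ℂ) (hz : ∀ n : ℕ, z ≠ ((zt α β (n : ℝ) : ℝ) : ℂ)) :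
    Multipliable (fun n : ℕ =>
      (1 - z / ((zt α β ((n : ℝ) + 1 - β) : ℝ) : ℂ)) /
        (1 - z / ((zt α β ((n : ℝ) + 1) : ℝ) : ℂ))) ∧
      mhat α β z =
        -(((Real.Gamma (2 + α + β) /
              ((2 : ℝ) ^ (1 + α + β) * β * Real.Gamma (1 + β) * Real.Gamma (2 + α)) : ℝ)) : ℂ) *
          ((z - ((zt α β (-β) : ℝ) : ℂ)) / z) *
          ∏' n : ℕ,
            (1 - z / ((zt α β ((n : ℝ) + 1 - β) : ℝ) : ℂ)) /
              (1 - z / ((zt α β ((n : ℝ) + 1) : ℝ) : ℂ)) := by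
  obtain ⟨hβ1, hβ2⟩ := hβ
  have hσ := sigmaAB_sq α β z
  unfold mhat
  set σ := sigmaAB α β z with hσdef
  obtain ⟨p, hp⟩ : ∃ p, p = (1 + (α : ℂ) + (β : ℂ) + σ) / 2 := ⟨_, rfl⟩
  obtain ⟨q, hq⟩ : ∃ q, q = (1 + (α : ℂ) + (β : ℂ) - σ) / 2 := ⟨_, rfl⟩
  obtain ⟨r, hr⟩ : ∃ r, r = (1 + (α : ℂ) - (β : ℂ) + σ) / 2 := ⟨_, rfl⟩
  obtain ⟨s, hs⟩ : ∃ s, s = (1 + (α : ℂ) - (β : ℂ) - σ) / 2 := ⟨_, rfl⟩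
  rw [← hp, ← hq, ← hr, ← hs]
  have hpq : ∀ t : ℂ, (p + t) * (q + t) = t * (t + 1 + α + β) - z := by
    intro t
    rw [hp, hq]
    linear_combination (-1 / 4 : ℂ) * hσ
  have hrs : ∀ t : ℂ, (r + t) * (s + t) = (t - β) * (t + 1 + α) - z := by
    intro t
    rw [hr, hs]
    linear_combination (-1 / 4 : ℂ) * hσ
  have hpq0 : ∀ n : ℕ, (p + n) * (q + n) ≠ 0 := by
    intro n h
    rw [hpq] at h
    refine hz n ?_
    rw [zt]
    push_cast
    linear_combination -h
  have hz0 : z ≠ 0 := by simpa [zt] using hz 0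
  have hp0 : ∀ n : ℕ, p + n ≠ 0 := fun n => left_ne_zero_of_mul (hpq0 n)
  have hq0 : ∀ n : ℕ, q + n ≠ 0 := fun n => right_ne_zero_of_mul (hpq0 n)
  have hn0 : ∀ n : ℕ, (0 : ℝ) ≤ n := fun n => n.cast_nonneg
  -- Each linear factor of `z_{n+1}` and `z_{n+1-β}` is positive.
  have hc : ∀ (c : ℝ), 0 < c → ∀ n : ℕ, ((c : ℂ) + n) ≠ 0 := by
    intro c hc n
    have := hn0 n
    exact_mod_cast (by linarith : (0 : ℝ) < c + n).ne'
  have c1 : ∀ n : ℕ, (1 : ℂ) + n ≠ 0 := by simpa using hc 1 one_pos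
  have c2 : ∀ n : ℕ, (2 : ℂ) + α + β + n ≠ 0 := by simpa using hc (2 + α + β) (by linarith)
  have c3 : ∀ n : ℕ, (1 : ℂ) - β + n ≠ 0 := by simpa using hc (1 - β) (by linarith)
  have c4 : ∀ n : ℕ, (2 : ℂ) + α + n ≠ 0 := by simpa using hc (2 + α) (by linarith)
  have ea : ∀ n : ℕ, ((zt α β ((n : ℝ) + 1 - β) : ℝ) : ℂ) = (1 - β + n) * (2 + α + n) := by
    intro n; rw [zt]; push_cast; ring
  have eb : ∀ n : ℕ, ((zt α β ((n : ℝ) + 1) : ℝ) : ℂ) = (1 + n) * (2 + α + β + n) := by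
    intro n; rw [zt]; push_cast; ring
  have ea' : ∀ n : ℕ, ((zt α β ((n : ℝ) + 1 - β) : ℝ) : ℂ) - z =
      (r + 1 + n) * (s + 1 + n) := by
    intro n; rw [ea]; linear_combination -hrs (1 + n)
  have eb' : ∀ n : ℕ, ((zt α β ((n : ℝ) + 1) : ℝ) : ℂ) - z =
      (p + 1 + n) * (q + 1 + n) := by
    intro n; rw [eb]; linear_combination -hpq (1 + n)
  have p1 : ∀ n : ℕ, p + 1 + n ≠ 0 := fun n h =>
    hp0 (n + 1) (by push_cast; linear_combination h)
  have q1 : ∀ n : ℕ, q + 1 + n ≠ 0 := fun n h =>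
    hq0 (n + 1) (by push_cast; linear_combination h)
  have a0 : ∀ n : ℕ, ((zt α β ((n : ℝ) + 1 - β) : ℝ) : ℂ) ≠ 0 := fun n => by
    rw [ea]; exact mul_ne_zero (c3 n) (c4 n)
  have b0 : ∀ n : ℕ, ((zt α β ((n : ℝ) + 1) : ℝ) : ℂ) ≠ 0 := fun n => by
    rw [eb]; exact mul_ne_zero (c1 n) (c2 n)
  have hmul : Multipliable (fun n : ℕ =>
      (1 - z / ((zt α β ((n : ℝ) + 1 - β) : ℝ) : ℂ)) /
        (1 - z / ((zt α β ((n : ℝ) + 1) : ℝ) : ℂ))) := by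
    refine multipliable_quotient (fun n : ℕ => zt α β ((n : ℝ) + 1 - β))
      (fun n : ℕ => zt α β ((n : ℝ) + 1)) ?_ ?_ z ?_
    · intro n
      have := hn0 n
      simp only [zt]
      rw [sq]
      apply mul_le_mul <;> linarith
    · intro n
      have := hn0 n
      simp only [zt]
      rw [sq]
      apply mul_le_mul <;> linarith
    · intro n h
      have h2 := b0 n
      rw [one_sub_div h2, eb', div_eq_zero_iff] at h
      exact h.elim (mul_ne_zero (p1 n) (q1 n)) h2
  refine ⟨hmul, ?_⟩
  have hfac : ∀ n : ℕ, (1 - z / ((zt α β ((n : ℝ) + 1 - β) : ℝ) : ℂ)) /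
        (1 - z / ((zt α β ((n : ℝ) + 1) : ℝ) : ℂ)) =
      ((r + 1 + n) * (s + 1 + n) * (1 + n) * (2 + α + β + n)) /
      ((p + 1 + n) * (q + 1 + n) * (1 - β + n) * (2 + α + n)) := by
    intro n
    rw [one_sub_div (a0 n), one_sub_div (b0 n), ea', eb', ea, eb, div_div_div_eq]
    congr 1 <;> ring
  -- Evaluation of the product; it holds also when both sides vanish.
  have hprod : ∏' n : ℕ, (1 - z / ((zt α β ((n : ℝ) + 1 - β) : ℝ) : ℂ)) /
        (1 - z / ((zt α β ((n : ℝ) + 1) : ℝ) : ℂ)) =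
      (Gamma (p + 1) * Gamma (q + 1) * Gamma (1 - β) * Gamma (2 + α)) /
      (Gamma (r + 1) * Gamma (s + 1) * Gamma 1 * Gamma (2 + α + β)) := by
    by_cases hzero : ∃ n : ℕ, (r + 1 + n) * (s + 1 + n) = 0
    · obtain ⟨n, hn⟩ := hzero
      rw [tprod_of_exists_eq_zero ⟨n, by rw [hfac, hn]; simp⟩]
      rcases mul_eq_zero.1 hn with h | h
      · rw [(Gamma_eq_zero_iff (r + 1)).2 ⟨n, by linear_combination h⟩]; simp
      · rw [(Gamma_eq_zero_iff (s + 1)).2 ⟨n, by linear_combination h⟩]; simp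
    · push Not at hzero
      have hne : ∀ x : ℂ, (∀ n : ℕ, x + n ≠ 0) → Gamma x ≠ 0 := fun x hx =>
        Gamma_ne_zero fun m hm => hx m (by rw [hm]; ring)
      have g1 := hne (r + 1) fun n => left_ne_zero_of_mul (hzero n)
      have g2 := hne (s + 1) fun n => right_ne_zero_of_mul (hzero n)
      have g3 := hne 1 c1
      have g4 := hne _ c2
      have T := ((((GammaSeq_tendsto_Gamma (p + 1)).mul (GammaSeq_tendsto_Gamma (q + 1))).mul
        (GammaSeq_tendsto_Gamma (1 - β))).mul (GammaSeq_tendsto_Gamma (2 + α))).div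
        ((((GammaSeq_tendsto_Gamma (r + 1)).mul (GammaSeq_tendsto_Gamma (s + 1))).mul
        (GammaSeq_tendsto_Gamma 1)).mul (GammaSeq_tendsto_Gamma (2 + α + β)))
        (mul_ne_zero (mul_ne_zero (mul_ne_zero g1 g2) g3) g4)
      refine tendsto_nhds_unique
        (hmul.tendsto_prod_tprod_nat.comp (tendsto_add_atTop_nat 1)) (T.congr' ?_)
      filter_upwards [eventually_ne_atTop 0] with n hn
      simp only [Pi.div_apply, Function.comp_apply, hfac]
      exact GammaSeq_quotient _ _ _ _ _ _ _ _ (by rw [hp, hq, hr, hs]; ring) hn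
  rw [hprod]
  have hr' := one_div_Gamma_eq_self_mul_one_div_Gamma_add_one r
  have hs' := one_div_Gamma_eq_self_mul_one_div_Gamma_add_one s
  have hp00 : p ≠ 0 := by simpa using hp0 0
  have hq00 : q ≠ 0 := by simpa using hq0 0
  have hpq' : p * q = -z := by simpa using hpq 0
  have hrs' : z - ((zt α β (-β) : ℝ) : ℂ) = -(r * s) := by
    have := hrs 0
    rw [zt]; push_cast
    linear_combination this
  have gβ : Gamma (2 + (α : ℂ)) ≠ 0 := Gamma_ne_zero_of_re_pos (by simp; linarith)
  have gαβ : Gamma (2 + (α : ℂ) + β) ≠ 0 := Gamma_ne_zero_of_re_pos (by simp; linarith)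
  have e1 : ((Real.Gamma (2 + α + β) : ℝ) : ℂ) = Gamma (2 + α + β) := by
    rw [← Complex.Gamma_ofReal]; push_cast; rfl
  have e2 : ((Real.Gamma (1 + β) : ℝ) : ℂ) = Gamma (1 + β) := by
    rw [← Complex.Gamma_ofReal]; push_cast; rfl
  have e3 : ((Real.Gamma (2 + α) : ℝ) : ℂ) = Gamma (2 + α) := by
    rw [← Complex.Gamma_ofReal]; push_cast; rfl
  rw [hrs', Gamma_add_one p hp00, Gamma_add_one q hq00, Gamma_one, Complex.ofReal_div]
  simp only [Complex.ofReal_mul, e1, e2, e3]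
  have hzz : z = -(p * q) := by rw [hpq']; ring
  generalize (((2 : ℝ) ^ (1 + α + β) : ℝ) : ℂ) = K
  -- The reciprocals of `Γ(r)`, `Γ(s)` are rewritten: in Mathlib `Γ` takes the value `0` at its poles, so
  -- these formulas hold for every `r` and `s`.
  have lhs : ∀ A B : ℂ, A * B / (Gamma r * Gamma s) =
      A * B * ((r * (Gamma (r + 1))⁻¹) * (s * (Gamma (s + 1))⁻¹)) := by
    intro A B
    rw [← hr', ← hs']; ring
  rw [lhs, hzz]
  simp only [div_eq_mul_inv, mul_inv, neg_mul, mul_neg, inv_neg, neg_neg, mul_one]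
  field_simp
end

section
/- Let α, β ∈ ℝ, let f : (-1,1) → ℂ be twice differentiable, and let x ∈ (-1,1). Then: (i) (1+x)^{-β} (τ_{α,-β} g)(x) = (τ_{α,β} f)(x) + (1+α)β f(x), where g(t) = (1+t)^β f(t); (ii) (1-x)^{-α} (τ_{-α,β} h)(x) = (τ_{α,β} f)(x) + (1+β)α f(x), where h(t) = (1-t)^α f(t); (iii) (1-x)^{-α}(1+x)^{-β} (τ_{-α,-β} w)(x) = (τ_{α,β} f)(x) + (α+β) f(x), where w(t) = (1-t)^α(1+t)^β f(t). -/
/-!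
The first two identities are the Leibniz rule applied to `u * f`, where the weight is `u = (1 + t) ^ β`
or `u = (1 - t) ^ α`: the cross term of the second derivative
undoes the sign change of the parameter in the coefficient of the first derivative of `f`, and the
terms in which only `u` is differentiated add up to a constant multiple of `u * f`. The third follows by composing them: the first identity with
`-α` in place of `α`, applied to `h = (1 - t) ^ α * f`, reduces the claim to the second, and the
constants combine as `(1 - α) * β + (1 + β) * α = α + β`.
-/

/-- The Jacobi differential expression
`(τ_{α,β} y)(x) = -(1-x²) y''(x) + (α-β+(α+β+2)x) y'(x)`. -/
noncomputable def jacobiTau (α β : ℝ) (y : ℝ → ℂ) (x : ℝ) : ℂ :=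
  -((1 - x ^ 2 : ℝ) : ℂ) * deriv (deriv y) x +
    ((α - β + (α + β + 2) * x : ℝ) : ℂ) * deriv y x

/-- Leibniz rule to second order. The first derivative is needed on the whole open set `s`, since
`deriv` of the product must be known near `x` before it can be differentiated at `x`. -/
lemma deriv_weight_mul {s : Set ℝ} (hs : IsOpen s) {u u₁ : ℝ → ℝ} {u₂ : ℝ} {f : ℝ → ℂ} {x : ℝ}
    (hx : x ∈ s) (hu : ∀ t ∈ s, HasDerivAt u (u₁ t) t) (hu₁ : HasDerivAt u₁ u₂ x)
    (hf : ∀ t ∈ s, DifferentiableAt ℝ f t ∧ DifferentiableAt ℝ (deriv f) t) :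
    (∀ t ∈ s, HasDerivAt (fun t => (u t : ℂ) * f t) ((u₁ t : ℂ) * f t + (u t : ℂ) * deriv f t) t) ∧
      HasDerivAt (deriv fun t => (u t : ℂ) * f t)
        ((u₂ : ℂ) * f x + 2 * (u₁ x : ℂ) * deriv f x + (u x : ℂ) * deriv (deriv f) x) x := by
  have h1 : ∀ t ∈ s,
      HasDerivAt (fun t => (u t : ℂ) * f t) ((u₁ t : ℂ) * f t + (u t : ℂ) * deriv f t) t :=
    fun t ht => (hu t ht).ofReal_comp.mul (hf t ht).1.hasDerivAt
  refine ⟨h1, ?_⟩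
  have h2 := (hu₁.ofReal_comp.mul (hf x hx).1.hasDerivAt).add
    ((hu x hx).ofReal_comp.mul (hf x hx).2.hasDerivAt)
  have h3 : (deriv fun t => (u t : ℂ) * f t) =ᶠ[nhds x]
      fun t => (u₁ t : ℂ) * f t + (u t : ℂ) * deriv f t :=
    Filter.eventually_of_mem (hs.mem_nhds hx) fun t ht => (h1 t ht).deriv
  refine (h2.congr_of_eventuallyEq h3).congr_deriv ?_
  ring

lemma hasDerivAt_one_add_rpow (c : ℝ) {t : ℝ} (ht : -1 < t) :
    HasDerivAt (fun t : ℝ => (1 + t) ^ c) (c * (1 + t) ^ (c - 1)) t := by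
  have h := ((hasDerivAt_id t).const_add 1).rpow_const (p := c) (Or.inl (by simp; linarith))
  simpa using h

lemma hasDerivAt_one_sub_rpow (c : ℝ) {t : ℝ} (ht : t < 1) :
    HasDerivAt (fun t : ℝ => (1 - t) ^ c) (-c * (1 - t) ^ (c - 1)) t := by
  have h := ((hasDerivAt_id t).const_sub 1).rpow_const (p := c) (Or.inl (by simp; linarith))
  simpa using h

lemma deriv_one_add_rpow_mul (c : ℝ) {f : ℝ → ℂ}
    (hf : ∀ x ∈ Set.Ioo (-1 : ℝ) 1, DifferentiableAt ℝ f x ∧ DifferentiableAt ℝ (deriv f) x)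
    {x : ℝ} (hx : x ∈ Set.Ioo (-1 : ℝ) 1) :
    (∀ t ∈ Set.Ioo (-1 : ℝ) 1, HasDerivAt (fun t => (((1 + t) ^ c : ℝ) : ℂ) * f t)
        (((c * (1 + t) ^ (c - 1) : ℝ) : ℂ) * f t + (((1 + t) ^ c : ℝ) : ℂ) * deriv f t) t) ∧
      HasDerivAt (deriv fun t => (((1 + t) ^ c : ℝ) : ℂ) * f t)
        (((c * ((c - 1) * (1 + x) ^ (c - 1 - 1)) : ℝ) : ℂ) * f x +
          2 * ((c * (1 + x) ^ (c - 1) : ℝ) : ℂ) * deriv f x +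
          (((1 + x) ^ c : ℝ) : ℂ) * deriv (deriv f) x) x :=
  deriv_weight_mul isOpen_Ioo hx (fun _ ht => hasDerivAt_one_add_rpow c ht.1)
    ((hasDerivAt_one_add_rpow (c - 1) hx.1).const_mul c) hf

lemma deriv_one_sub_rpow_mul (c : ℝ) {f : ℝ → ℂ}
    (hf : ∀ x ∈ Set.Ioo (-1 : ℝ) 1, DifferentiableAt ℝ f x ∧ DifferentiableAt ℝ (deriv f) x)
    {x : ℝ} (hx : x ∈ Set.Ioo (-1 : ℝ) 1) :
    (∀ t ∈ Set.Ioo (-1 : ℝ) 1, HasDerivAt (fun t => (((1 - t) ^ c : ℝ) : ℂ) * f t)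
        (((-c * (1 - t) ^ (c - 1) : ℝ) : ℂ) * f t + (((1 - t) ^ c : ℝ) : ℂ) * deriv f t) t) ∧
      HasDerivAt (deriv fun t => (((1 - t) ^ c : ℝ) : ℂ) * f t)
        (((-c * (-(c - 1) * (1 - x) ^ (c - 1 - 1)) : ℝ) : ℂ) * f x +
          2 * ((-c * (1 - x) ^ (c - 1) : ℝ) : ℂ) * deriv f x +
          (((1 - x) ^ c : ℝ) : ℂ) * deriv (deriv f) x) x :=
  deriv_weight_mul isOpen_Ioo hx (fun _ ht => hasDerivAt_one_sub_rpow c ht.2)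
    ((hasDerivAt_one_sub_rpow (c - 1) hx.2).const_mul (-c)) hf

lemma jacobiTau_one_add_rpow_mul (α β : ℝ) (f : ℝ → ℂ)
    (hf : ∀ x ∈ Set.Ioo (-1 : ℝ) 1, DifferentiableAt ℝ f x ∧ DifferentiableAt ℝ (deriv f) x)
    (x : ℝ) (hx : x ∈ Set.Ioo (-1 : ℝ) 1) :
    (((1 + x) ^ (-β) : ℝ) : ℂ) *
        jacobiTau α (-β) (fun t => (((1 + t) ^ β : ℝ) : ℂ) * f t) x =
      jacobiTau α β f x + (((1 + α) * β : ℝ) : ℂ) * f x := by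
  obtain ⟨h1, h2⟩ := deriv_one_add_rpow_mul β hf hx
  have hp : 0 < 1 + x := by linarith [hx.1]
  have hpc : (1 + x : ℂ) ≠ 0 := by exact_mod_cast hp.ne'
  have hw : (((1 + x) ^ β : ℝ) : ℂ) ≠ 0 := by exact_mod_cast (Real.rpow_pos_of_pos hp β).ne'
  rw [jacobiTau, jacobiTau, (h1 x hx).deriv, h2.deriv, Real.rpow_sub_one hp.ne',
    Real.rpow_sub_one hp.ne', Real.rpow_neg hp.le]
  generalize (1 + x) ^ β = w at *
  push_cast
  field_simp
  ring

lemma jacobiTau_one_sub_rpow_mul (α β : ℝ) (f : ℝ → ℂ)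
    (hf : ∀ x ∈ Set.Ioo (-1 : ℝ) 1, DifferentiableAt ℝ f x ∧ DifferentiableAt ℝ (deriv f) x)
    (x : ℝ) (hx : x ∈ Set.Ioo (-1 : ℝ) 1) :
    (((1 - x) ^ (-α) : ℝ) : ℂ) *
        jacobiTau (-α) β (fun t => (((1 - t) ^ α : ℝ) : ℂ) * f t) x =
      jacobiTau α β f x + (((1 + β) * α : ℝ) : ℂ) * f x := by
  obtain ⟨h1, h2⟩ := deriv_one_sub_rpow_mul α hf hx
  have hp : 0 < 1 - x := by linarith [hx.2]
  have hpc : (1 - x : ℂ) ≠ 0 := by exact_mod_cast hp.ne'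
  have hw : (((1 - x) ^ α : ℝ) : ℂ) ≠ 0 := by exact_mod_cast (Real.rpow_pos_of_pos hp α).ne'
  rw [jacobiTau, jacobiTau, (h1 x hx).deriv, h2.deriv, Real.rpow_sub_one hp.ne',
    Real.rpow_sub_one hp.ne', Real.rpow_neg hp.le]
  generalize (1 - x) ^ α = w at *
  push_cast
  field_simp
  ring

/-- The commutation relations between Jacobi differential expressions with reflected
parameters, conjugated by the corresponding weights. -/
theorem jacobiTau_conjugation (α β : ℝ) (f : ℝ → ℂ)
    (hf : ∀ x ∈ Set.Ioo (-1 : ℝ) 1,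
      DifferentiableAt ℝ f x ∧ DifferentiableAt ℝ (deriv f) x)
    (x : ℝ) (hx : x ∈ Set.Ioo (-1 : ℝ) 1) :
    (((1 + x) ^ (-β) : ℝ) : ℂ) *
        jacobiTau α (-β) (fun t => (((1 + t) ^ β : ℝ) : ℂ) * f t) x =
      jacobiTau α β f x + (((1 + α) * β : ℝ) : ℂ) * f x ∧
    (((1 - x) ^ (-α) : ℝ) : ℂ) *
        jacobiTau (-α) β (fun t => (((1 - t) ^ α : ℝ) : ℂ) * f t) x =
      jacobiTau α β f x + (((1 + β) * α : ℝ) : ℂ) * f x ∧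
    (((1 - x) ^ (-α) * (1 + x) ^ (-β) : ℝ) : ℂ) *
        jacobiTau (-α) (-β) (fun t => (((1 - t) ^ α * (1 + t) ^ β : ℝ) : ℂ) * f t) x =
      jacobiTau α β f x + ((α + β : ℝ) : ℂ) * f x := by
  refine ⟨jacobiTau_one_add_rpow_mul α β f hf x hx, jacobiTau_one_sub_rpow_mul α β f hf x hx, ?_⟩
  have hh : ∀ t ∈ Set.Ioo (-1 : ℝ) 1,
      DifferentiableAt ℝ (fun t => (((1 - t) ^ α : ℝ) : ℂ) * f t) t ∧
        DifferentiableAt ℝ (deriv fun t => (((1 - t) ^ α : ℝ) : ℂ) * f t) t := fun t ht =>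
    ⟨((deriv_one_sub_rpow_mul α hf ht).1 t ht).differentiableAt,
      (deriv_one_sub_rpow_mul α hf ht).2.differentiableAt⟩
  have h1 := jacobiTau_one_add_rpow_mul (-α) β _ hh x hx
  have h2 := jacobiTau_one_sub_rpow_mul α β f hf x hx
  have hfun : (fun t : ℝ => (((1 - t) ^ α * (1 + t) ^ β : ℝ) : ℂ) * f t) =
      fun t => (((1 + t) ^ β : ℝ) : ℂ) * ((((1 - t) ^ α : ℝ) : ℂ) * f t) := by
    funext t
    rw [Complex.ofReal_mul]
    ring
  have hp : 0 < 1 - x := by linarith [hx.2]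
  have hw : (((1 - x) ^ (-α) : ℝ) : ℂ) * (((1 - x) ^ α : ℝ) : ℂ) = 1 := by
    rw [← Complex.ofReal_mul, ← Real.rpow_add hp]
    simp
  rw [hfun, Complex.ofReal_mul, mul_assoc, h1, mul_add, h2]
  push_cast at hw ⊢
  linear_combination (1 - (α : ℂ)) * β * f x * hw
end

section
/- Let α, β ∈ ℝ, let f : (-1,1) → ℂ be twice differentiable, let x ∈ (-1,1), and set g(t) = (1-t)^{-α/2}(1+t)^{-β/2} f(t). Then (1-x)^{α/2}(1+x)^{β/2} (τ_{α,β} g)(x) = -(1-x²) f''(x) + 2x f'(x) + [ (α²/4)·(1+x)/(1-x) + (β²/4)·(1-x)/(1+x) - (α+β+αβ)/2 ] f(x); that is, conjugating τ_{α,β} by the weight (1-x)^{-α/2}(1+x)^{-β/2} produces the Schrödinger-type expression -(d/dx)((1-x²)(d/dx)) + (α²/4)(1+x)/(1-x) + (β²/4)(1-x)/(1+x) - (α+β+αβ)/2. -/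
/-- The logarithmic derivative `p` of the weight `(1-t)^{-α/2} (1+t)^{-β/2}`. -/
noncomputable def weightLogDeriv (α β t : ℝ) : ℝ :=
  (α / 2) / (1 - t) - (β / 2) / (1 + t)

lemma hasDerivAt_weightLogDeriv (α β : ℝ) {t : ℝ} (ht : t ∈ Set.Ioo (-1 : ℝ) 1) :
    HasDerivAt (weightLogDeriv α β) ((α / 2) / (1 - t) ^ 2 + (β / 2) / (1 + t) ^ 2) t := by
  have h1 : 1 - t ≠ 0 := by linarith [ht.2]
  have h2 : 1 + t ≠ 0 := by linarith [ht.1]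
  have d1 := (hasDerivAt_const t (α / 2)).fun_div ((hasDerivAt_id' t).const_sub 1) h1
  have d2 := (hasDerivAt_const t (β / 2)).fun_div ((hasDerivAt_id' t).const_add 1) h2
  refine (d1.fun_sub d2).congr_deriv ?_
  field_simp
  ring

lemma hasDerivAt_weight (α β : ℝ) {t : ℝ} (ht : t ∈ Set.Ioo (-1 : ℝ) 1) :
    HasDerivAt (fun s : ℝ => (1 - s) ^ (-α / 2) * (1 + s) ^ (-β / 2))
      ((1 - t) ^ (-α / 2) * (1 + t) ^ (-β / 2) * weightLogDeriv α β t) t := by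
  have h1 : 1 - t ≠ 0 := by linarith [ht.2]
  have h2 : 1 + t ≠ 0 := by linarith [ht.1]
  have d1 := ((hasDerivAt_id' t).const_sub 1).rpow_const (p := -α / 2) (Or.inl h1)
  have d2 := ((hasDerivAt_id' t).const_add 1).rpow_const (p := -β / 2) (Or.inl h2)
  refine (d1.fun_mul d2).congr_deriv ?_
  rw [Real.rpow_sub_one h1, Real.rpow_sub_one h2, weightLogDeriv]
  field_simp
  ring

/-- Conjugation by the weight turns `d/dt` into `d/dt + p`. -/
lemma hasDerivAt_weight_mul (α β : ℝ) {h : ℝ → ℂ} {h' : ℂ} {t : ℝ}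
    (ht : t ∈ Set.Ioo (-1 : ℝ) 1) (hh : HasDerivAt h h' t) :
    HasDerivAt (fun s : ℝ => (((1 - s) ^ (-α / 2) * (1 + s) ^ (-β / 2) : ℝ) : ℂ) * h s)
      ((((1 - t) ^ (-α / 2) * (1 + t) ^ (-β / 2) : ℝ) : ℂ) *
        (h' + (weightLogDeriv α β t : ℂ) * h t)) t := by
  refine ((hasDerivAt_weight α β ht).ofReal_comp.fun_mul hh).congr_deriv ?_
  push_cast
  ring

/-- Conjugating `τ_{α,β}` by the weight `(1-x)^{-α/2}(1+x)^{-β/2}` produces the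
Schrödinger-type expression
`-(d/dx)((1-x²)(d/dx)) + (α²/4)(1+x)/(1-x) + (β²/4)(1-x)/(1+x) - (α+β+αβ)/2`. -/
theorem jacobiTau_schroedinger_form (α β : ℝ) (f : ℝ → ℂ)
    (hf : ∀ x ∈ Set.Ioo (-1 : ℝ) 1,
      DifferentiableAt ℝ f x ∧ DifferentiableAt ℝ (deriv f) x)
    (x : ℝ) (hx : x ∈ Set.Ioo (-1 : ℝ) 1) :
    (((1 - x) ^ (α / 2) * (1 + x) ^ (β / 2) : ℝ) : ℂ) *
        jacobiTau α β
          (fun t => (((1 - t) ^ (-α / 2) * (1 + t) ^ (-β / 2) : ℝ) : ℂ) * f t) x =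
      -((1 - x ^ 2 : ℝ) : ℂ) * deriv (deriv f) x + ((2 * x : ℝ) : ℂ) * deriv f x +
        (((α ^ 2 / 4) * (1 + x) / (1 - x) + (β ^ 2 / 4) * (1 - x) / (1 + x) -
            (α + β + α * β) / 2 : ℝ) : ℂ) * f x := by
  have hp : 0 < 1 - x := by linarith [hx.2]
  have hq : 0 < 1 + x := by linarith [hx.1]
  have first : ∀ t ∈ Set.Ioo (-1 : ℝ) 1,
      deriv (fun t => (((1 - t) ^ (-α / 2) * (1 + t) ^ (-β / 2) : ℝ) : ℂ) * f t) t =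
        (((1 - t) ^ (-α / 2) * (1 + t) ^ (-β / 2) : ℝ) : ℂ) *
          (deriv f t + (weightLogDeriv α β t : ℂ) * f t) := fun t ht =>
    (hasDerivAt_weight_mul α β ht (hf t ht).1.hasDerivAt).deriv
  have second := (hasDerivAt_weight_mul α β hx ((hf x hx).2.hasDerivAt.fun_add
    ((hasDerivAt_weightLogDeriv α β hx).ofReal_comp.fun_mul (hf x hx).1.hasDerivAt))).deriv
  -- `first` holds on a neighbourhood of `x`, so it may be differentiated at `x`.
  rw [← Filter.EventuallyEq.deriv_eq
    (Filter.eventuallyEq_of_mem (isOpen_Ioo.mem_nhds hx) first)] at second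
  have cancel : (((1 - x) ^ (α / 2) * (1 + x) ^ (β / 2) : ℝ) : ℂ) *
      (((1 - x) ^ (-α / 2) * (1 + x) ^ (-β / 2) : ℝ) : ℂ) = 1 := by
    rw [← Complex.ofReal_mul, mul_mul_mul_comm, ← Real.rpow_add hp, ← Real.rpow_add hq,
      neg_div, neg_div, add_neg_cancel, add_neg_cancel, Real.rpow_zero, Real.rpow_zero, mul_one,
      Complex.ofReal_one]
  rw [jacobiTau, second, first x hx]
  generalize (((1 - x) ^ (α / 2) * (1 + x) ^ (β / 2) : ℝ) : ℂ) = v at cancel ⊢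
  generalize (((1 - x) ^ (-α / 2) * (1 + x) ^ (-β / 2) : ℝ) : ℂ) = w at cancel ⊢
  have hpC : (1 - x : ℂ) ≠ 0 := by exact_mod_cast hp.ne'
  have hqC : (1 + x : ℂ) ≠ 0 := by exact_mod_cast hq.ne'
  rw [weightLogDeriv]
  push_cast
  generalize deriv (deriv f) x = f2
  generalize deriv f x = f1
  generalize f x = f0
  -- Factoring out `v * w = 1` leaves the rational identity.
  rw [show ∀ a b c d : ℂ, v * (a * (w * b) + c * (w * d)) = v * w * (a * b + c * d) from
    fun a b c d => by ring, cancel]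
  field_simp
  ring
end

section
/- Let α, β ∈ ℝ and define y₂(x) = ∫_0^x (1-t)^{-1-α}(1+t)^{-1-β} dt for x ∈ (-1,1). Then the constant function 1 and the function y₂ both belong to L²((-1,0); (1-x)^α(1+x)^β dx) if and only if β ∈ (-1,1). (This is the concrete integrability statement behind the classification: the Jacobi differential expression τ_{α,β} is in the limit circle case at the endpoint -1 exactly when β ∈ (-1,1).) -/
open MeasureTheory

/-!
Near `-1` the factor `1 - x` lies in `[1, 2]`, so `(1 - x) ^ s` is bounded above and below by positive
constants (`rpow_one_sub_bounds`) and only the powers of `1 + x` matter; `(1 + x) ^ s` is integrable on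
`(-1, b)` iff `-1 < s` (`integrableOn_one_add_rpow_iff`).

The constant solution is therefore square integrable iff `-1 < β`. If `1 ≤ β`, then `|y₂|` is at least a
multiple of `(1 + x) ^ (-β) - 1`, hence of `(1 + x) ^ (-β)` on `(-1, -1/2)`, and `y₂ ^ 2` times the
weight dominates a multiple of the non-integrable `(1 + x) ^ (-β)`. If `-1 < β < 1`, choose `γ` with
`max β 0 < γ < (1 + β) / 2`; then `|y₂|` is at most a multiple of `(1 + x) ^ (-γ)`, and `y₂ ^ 2` times
the weight is dominated by a multiple of `(1 + x) ^ (β - 2 * γ)`, which is integrable. Working with `γ`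
instead of `β` covers the cases `β < 0`, `β = 0` (where `y₂` is logarithmic) and `β > 0` at once.
-/

lemma integrableOn_one_add_rpow_iff {s b : ℝ} (hb : -1 < b) :
    IntegrableOn (fun x : ℝ => (1 + x) ^ s) (Set.Ioo (-1) b) ↔ -1 < s := by
  rw [← intervalIntegral.integrableOn_Ioo_rpow_iff (s := s) (t := 1 + b) (by linarith)]
  have h := (measurePreserving_add_left (volume : Measure ℝ) 1).integrableOn_comp_preimage
    (measurableEmbedding_addLeft 1) (f := fun x : ℝ => x ^ s) (s := Set.Ioo 0 (1 + b))
  rw [← h, Set.preimage_const_add_Ioo]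
  norm_num [Function.comp_def]

lemma rpow_one_sub_bounds (s : ℝ) {x : ℝ} (h1 : -1 ≤ x) (h2 : x ≤ 0) :
    ((2 : ℝ) ^ |s|)⁻¹ ≤ (1 - x) ^ s ∧ (1 - x) ^ s ≤ (2 : ℝ) ^ |s| := by
  have key : ∀ r : ℝ, (1 - x) ^ r ≤ (2 : ℝ) ^ |r| := fun r =>
    (Real.rpow_le_rpow_of_exponent_le (by linarith) (le_abs_self r)).trans
      (Real.rpow_le_rpow (by linarith) (by linarith) (abs_nonneg r))
  refine ⟨?_, key s⟩
  have h := key (-s)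
  rw [abs_neg, Real.rpow_neg (by linarith)] at h
  exact inv_le_of_inv_le₀ (Real.rpow_pos_of_pos (by linarith) s) h

lemma integral_one_add_rpow {s x : ℝ} (hs : s ≠ 0) (h1 : -1 < x) :
    ∫ t in x..0, (1 + t) ^ (-1 - s) = ((1 + x) ^ (-s) - 1) / s := by
  rw [intervalIntegral.integral_comp_add_left (fun t : ℝ => t ^ (-1 - s)) 1, integral_rpow]
  · rw [show -1 - s + 1 = -s by ring, add_zero, Real.one_rpow]
    field_simp
    ring
  · refine Or.inr ⟨fun h => hs (by linarith), fun h => ?_⟩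
    rw [Set.mem_uIcc] at h
    rcases h with h | h <;> linarith [h.1, h.2]

lemma intervalIntegrable_jacobi (a b : ℝ) {x y : ℝ} (hx : x ∈ Set.Ioo (-1 : ℝ) 1)
    (hy : y ∈ Set.Ioo (-1 : ℝ) 1) :
    IntervalIntegrable (fun t : ℝ => (1 - t) ^ a * (1 + t) ^ b) volume x y := by
  apply ContinuousOn.intervalIntegrable
  intro t ht
  have ht' : t ∈ Set.Ioo (-1 : ℝ) 1 := Set.OrdConnected.uIcc_subset Set.ordConnected_Ioo hx hy ht
  apply ContinuousAt.continuousWithinAt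
  exact ((continuousAt_const.sub continuousAt_id).rpow_const (Or.inl (by simp; linarith [ht'.2]))).mul
    ((continuousAt_const.add continuousAt_id).rpow_const (Or.inl (by simp; linarith [ht'.1])))

lemma intervalIntegrable_one_add_rpow (b : ℝ) {x : ℝ} (h1 : -1 < x) (h2 : x ≤ 0) :
    IntervalIntegrable (fun t : ℝ => (1 + t) ^ b) volume x 0 := by
  simpa using intervalIntegrable_jacobi 0 b (x := x) (y := 0) ⟨h1, by linarith⟩ (by norm_num)

lemma continuousOn_jacobi_primitive (a b : ℝ) :
    ContinuousOn (fun x : ℝ => ∫ t in (0 : ℝ)..x, (1 - t) ^ a * (1 + t) ^ b) (Set.Ioo (-1) 0) := by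
  intro x hx
  have hc : (-1 + x) / 2 ∈ Set.Ioo (-1 : ℝ) 1 := ⟨by linarith [hx.1], by linarith [hx.2]⟩
  have h := intervalIntegral.continuousOn_primitive_interval' (a := 0)
    (intervalIntegrable_jacobi a b hc (y := 0) (by norm_num)) Set.right_mem_uIcc
  apply ContinuousAt.continuousWithinAt
  apply h.continuousAt
  rw [Set.uIcc_of_le (by linarith [hx.2])]
  exact Icc_mem_nhds (by linarith [hx.1]) hx.2

lemma abs_jacobi_primitive (a b : ℝ) {x : ℝ} (h1 : -1 < x) (h2 : x ≤ 0) :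
    |∫ t in (0 : ℝ)..x, (1 - t) ^ a * (1 + t) ^ b| = ∫ t in x..0, (1 - t) ^ a * (1 + t) ^ b := by
  rw [intervalIntegral.integral_symm, abs_neg, abs_of_nonneg]
  refine intervalIntegral.integral_nonneg h2 fun t ht => ?_
  exact mul_nonneg (Real.rpow_nonneg (by linarith [ht.2]) _) (Real.rpow_nonneg (by linarith [ht.1]) _)

/-- Upper bound for `|y₂|`, with an exponent `γ ≥ β` made positive so that the comparison integral is
never logarithmic. -/
lemma abs_jacobi_primitive_le (a : ℝ) {β γ x : ℝ} (hγ : 0 < γ) (hβγ : β ≤ γ) (h1 : -1 < x)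
    (h2 : x ≤ 0) :
    |∫ t in (0 : ℝ)..x, (1 - t) ^ a * (1 + t) ^ (-1 - β)| ≤
      (2 : ℝ) ^ |a| / γ * (1 + x) ^ (-γ) := by
  rw [abs_jacobi_primitive a _ h1 h2]
  have hC : (0 : ℝ) < 2 ^ |a| := by positivity
  calc ∫ t in x..0, (1 - t) ^ a * (1 + t) ^ (-1 - β)
      ≤ ∫ t in x..0, (2 : ℝ) ^ |a| * (1 + t) ^ (-1 - γ) := by
        refine intervalIntegral.integral_mono_on h2
          (intervalIntegrable_jacobi _ _ ⟨h1, by linarith⟩ (by norm_num))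
          ((intervalIntegrable_one_add_rpow _ h1 h2).const_mul _) fun t ht => ?_
        have ht1 : 0 < 1 + t := by linarith [ht.1]
        exact mul_le_mul (rpow_one_sub_bounds a (by linarith [ht.1]) ht.2).2
          (Real.rpow_le_rpow_of_exponent_ge ht1 (by linarith [ht.2]) (by linarith))
          (Real.rpow_nonneg ht1.le _) hC.le
    _ = (2 : ℝ) ^ |a| * (((1 + x) ^ (-γ) - 1) / γ) := by
        rw [intervalIntegral.integral_const_mul, integral_one_add_rpow hγ.ne' h1]
    _ ≤ (2 : ℝ) ^ |a| * ((1 + x) ^ (-γ) / γ) := by gcongr; linarith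
    _ = _ := by ring

lemma le_abs_jacobi_primitive (a : ℝ) {β x : ℝ} (hβ : 1 ≤ β) (h1 : -1 < x) (h2 : x ≤ -1 / 2) :
    ((2 : ℝ) ^ |a|)⁻¹ / (2 * β) * (1 + x) ^ (-β) ≤
      |∫ t in (0 : ℝ)..x, (1 - t) ^ a * (1 + t) ^ (-1 - β)| := by
  have h2' : x ≤ 0 := by linarith
  rw [abs_jacobi_primitive a _ h1 h2']
  have hx : 0 < 1 + x := by linarith
  -- For `1 + x ≤ 1/2` and `1 ≤ β` the subtracted `1` is at most half of `(1 + x) ^ (-β)`.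
  have htwo : 2 ≤ (1 + x) ^ (-β) := by
    calc (2 : ℝ) ≤ (1 + x)⁻¹ := by
          rw [le_inv_comm₀ (by norm_num) hx]; linarith
      _ = (1 + x) ^ (-1 : ℝ) := (Real.rpow_neg_one _).symm
      _ ≤ _ := Real.rpow_le_rpow_of_exponent_ge hx (by linarith) (by linarith)
  calc ((2 : ℝ) ^ |a|)⁻¹ / (2 * β) * (1 + x) ^ (-β)
      = ((2 : ℝ) ^ |a|)⁻¹ * (((1 + x) ^ (-β) / 2) / β) := by field_simp
    _ ≤ ((2 : ℝ) ^ |a|)⁻¹ * (((1 + x) ^ (-β) - 1) / β) := by gcongr; linarith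
    _ = ∫ t in x..0, ((2 : ℝ) ^ |a|)⁻¹ * (1 + t) ^ (-1 - β) := by
        rw [intervalIntegral.integral_const_mul, integral_one_add_rpow (by linarith) h1]
    _ ≤ _ := by
        refine intervalIntegral.integral_mono_on h2'
          ((intervalIntegrable_one_add_rpow _ h1 h2').const_mul _)
          (intervalIntegrable_jacobi _ _ ⟨h1, by linarith⟩ (by norm_num)) fun t ht => ?_
        exact mul_le_mul_of_nonneg_right (rpow_one_sub_bounds a (by linarith [ht.1]) ht.2).1
          (Real.rpow_nonneg (by linarith [ht.1]) _)

/-- If `(1 + x) ^ s` is dominated near `-1` by a constant multiple of an integrable function, then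
`-1 < s`. -/
lemma neg_one_lt_of_dominated {s b c : ℝ} {f : ℝ → ℝ} (hb : -1 < b) (hc : 0 < c)
    (hf : IntegrableOn f (Set.Ioo (-1) b))
    (h : ∀ x ∈ Set.Ioo (-1) b, c * (1 + x) ^ s ≤ f x) : -1 < s := by
  rw [← integrableOn_one_add_rpow_iff hb]
  refine Integrable.mono' (hf.const_mul c⁻¹)
    (Measurable.aestronglyMeasurable (by fun_prop)) ?_
  filter_upwards [ae_restrict_mem measurableSet_Ioo] with x hx
  rw [Real.norm_of_nonneg (Real.rpow_nonneg (by linarith [hx.1]) _), le_inv_mul_iff₀ hc]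
  exact h x hx

/-- The constant solution `1` and the second solution
`y₂(x) = ∫_0^x (1-t)^{-1-α}(1+t)^{-1-β} dt` of `τ_{α,β} y = 0` both lie in
`L²((-1,0); (1-x)^α(1+x)^β dx)` if and only if `β ∈ (-1,1)` (limit circle at `-1`). -/
theorem jacobi_limit_circle_at_minus_one_iff (α β : ℝ) :
    (IntegrableOn
        (fun x : ℝ => |(1 : ℝ)| ^ 2 * ((1 - x) ^ α * (1 + x) ^ β))
        (Set.Ioo (-1 : ℝ) 0) ∧
      IntegrableOn
        (fun x : ℝ =>
          |∫ t in (0 : ℝ)..x, (1 - t) ^ (-1 - α) * (1 + t) ^ (-1 - β)| ^ 2 *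
            ((1 - x) ^ α * (1 + x) ^ β))
        (Set.Ioo (-1 : ℝ) 0)) ↔
      β ∈ Set.Ioo (-1 : ℝ) 1 := by
  constructor
  · rintro ⟨hone, hy⟩
    constructor
    · refine neg_one_lt_of_dominated (by norm_num) (c := ((2 : ℝ) ^ |α|)⁻¹) (by positivity) hone
        fun x hx => ?_
      rw [abs_one, one_pow, one_mul]
      exact mul_le_mul_of_nonneg_right (rpow_one_sub_bounds α hx.1.le hx.2.le).1
        (Real.rpow_nonneg (by linarith [hx.1]) _)
    · by_contra! hβ
      have hβ0 : 0 < β := by linarith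
      have hlt : -1 < -β := by
        refine neg_one_lt_of_dominated (b := -1 / 2) (by norm_num)
          (c := (((2 : ℝ) ^ |-1 - α|)⁻¹ / (2 * β)) ^ 2 * ((2 : ℝ) ^ |α|)⁻¹) (by positivity)
          (hy.mono_set (Set.Ioo_subset_Ioo_right (by norm_num))) fun x hx => ?_
        have hx0 : 0 < 1 + x := by linarith [hx.1]
        have hpow : (1 + x) ^ (-β) = ((1 + x) ^ (-β)) ^ 2 * (1 + x) ^ β := by
          rw [sq, mul_assoc, ← Real.rpow_add hx0, neg_add_cancel, Real.rpow_zero, mul_one]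
        have hpos : 0 ≤ (1 + x) ^ (-β) := Real.rpow_nonneg hx0.le _
        have hposβ : 0 ≤ (1 + x) ^ β := Real.rpow_nonneg hx0.le _
        calc _ = (((2 : ℝ) ^ |-1 - α|)⁻¹ / (2 * β) * (1 + x) ^ (-β)) ^ 2 *
              (((2 : ℝ) ^ |α|)⁻¹ * (1 + x) ^ β) := by
                rw [mul_pow]
                linear_combination (((2 : ℝ) ^ |-1 - α|)⁻¹ / (2 * β)) ^ 2 * ((2 : ℝ) ^ |α|)⁻¹ * hpow
          _ ≤ _ := by
            gcongr
            · exact le_abs_jacobi_primitive _ hβ hx.1 hx.2.le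
            · exact (rpow_one_sub_bounds α hx.1.le (by linarith [hx.2])).1
      linarith
  · rintro ⟨hβ1, hβ2⟩
    constructor
    · refine Integrable.mono' (((integrableOn_one_add_rpow_iff (by norm_num)).2 hβ1).const_mul
        ((2 : ℝ) ^ |α|)) (by fun_prop) ?_
      filter_upwards [ae_restrict_mem measurableSet_Ioo] with x hx
      have hx0 : 0 < 1 + x := by linarith [hx.1]
      have hx1 : 0 < 1 - x := by linarith [hx.2]
      rw [abs_one, one_pow, one_mul, Real.norm_of_nonneg (by positivity)]
      exact mul_le_mul_of_nonneg_right (rpow_one_sub_bounds α hx.1.le hx.2.le).2 (by positivity)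
    · obtain ⟨γ, hγ1, hγ2⟩ : ∃ γ, max β 0 < γ ∧ γ < (1 + β) / 2 :=
        exists_between (max_lt (by linarith) (by linarith))
      obtain ⟨hβγ, hγ0⟩ := max_lt_iff.1 hγ1
      refine Integrable.mono' (((integrableOn_one_add_rpow_iff (s := β - 2 * γ)
        (by norm_num)).2 (by linarith)).const_mul
          (((2 : ℝ) ^ |-1 - α| / γ) ^ 2 * (2 : ℝ) ^ |α|)) ?_ ?_
      · refine AEStronglyMeasurable.mul ?_ (by fun_prop)
        exact (((continuousOn_jacobi_primitive _ _).abs).pow 2).aestronglyMeasurable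
          measurableSet_Ioo
      filter_upwards [ae_restrict_mem measurableSet_Ioo] with x hx
      have hx0 : 0 < 1 + x := by linarith [hx.1]
      have hx1 : 0 < 1 - x := by linarith [hx.2]
      have hpow : (1 + x) ^ (β - 2 * γ) = ((1 + x) ^ (-γ)) ^ 2 * (1 + x) ^ β := by
        rw [sq, ← Real.rpow_add hx0, ← Real.rpow_add hx0]
        congr 1; ring
      rw [Real.norm_of_nonneg (by positivity)]
      calc _ ≤ ((2 : ℝ) ^ |-1 - α| / γ * (1 + x) ^ (-γ)) ^ 2 *
              ((2 : ℝ) ^ |α| * (1 + x) ^ β) := by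
            gcongr
            · exact abs_jacobi_primitive_le _ hγ0 hβγ.le hx.1 hx.2.le
            · exact (rpow_one_sub_bounds α hx.1.le hx.2.le).2
        _ = _ := by rw [hpow]; ring
end

section
/- Let α ∈ ℝ, z ∈ ℂ, σ = ((1+α)²+4z)^{1/2} (principal square root), a_± = (1+α±σ)/2, and assume neither a₊ nor a₋ is a nonpositive integer. Define, for x ∈ (-1,1), y(x) = ₂F₁(a₊,a₋;1;(1+x)/2) · ln((1+x)/2) + Σ_{n=1}^∞ ((a₊)_n (a₋)_n / (2^n (n!)²)) (1+x)^n [ψ(a₊+n) - ψ(a₊) + ψ(a₋+n) - ψ(a₋) - 2ψ(n+1) - 2γ_E]. Then y is twice differentiable on (-1,1) and satisfies -(1-x²) y''(x) + (α + (α+2)x) y'(x) = z y(x) for all x ∈ (-1,1). -/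
/-!
In the variable `ξ = (1 + x) / 2` the equation becomes the hypergeometric equation
`ξ (1 - ξ) Y'' + (1 - (a + b + 1) ξ) Y' - a b Y = 0` with `a = a₊`, `b = a₋`, because
`a + b = 1 + α` and `a b = -z` (`exponent_prod`). The recurrence `ψ(s + 1) = ψ(s) + 1 / s` turns
the digamma bracket into the finite sum of `1 / (a + k) + 1 / (b + k) - 2 / (k + 1)` over `k < n`
(`bracket_eq`), so `y = F log ξ + G`, where `F` and `G` are power series in `ξ` with coefficients
`c n = (a)_n (b)_n / (n!)²` and `d n = c n * (bracket)`.

Both series have radius of convergence at least `1`: the ratio test applies to `c`, and the bracket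
grows at most linearly. They may therefore be differentiated termwise (`hasDerivAt_powSum`).
The recurrence `(n + 1)² c (n + 1) = (a + n) (b + n) c n` says that the hypergeometric operator `L`
annihilates `F` (`hyp_ode`), whence `L (F log ξ) = 2 (1 - ξ) F' - (a + b) F`. The recurrence
`(n + 1)² d (n + 1) = (a + n) (b + n) d n + (a + b + 2 n) c n - 2 (n + 1) c (n + 1)` says that `L G`
is the negative of this (`log_ode`).
-/

open Complex

/-- The Pochhammer symbol `(u)_n = ∏_{j=0}^{n-1} (u+j)` for complex `u`. -/
noncomputable def cpoch (u : ℂ) (n : ℕ) : ℂ := ∏ j ∈ Finset.range n, (u + (j : ℂ))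

/-- The Gauss hypergeometric series `₂F₁(a,b;c;ξ)`. -/
noncomputable def hyp2F1 (a b c ξ : ℂ) : ℂ :=
  ∑' n : ℕ, cpoch a n * cpoch b n / (cpoch c n * (n.factorial : ℂ)) * ξ ^ n

/-- The digamma function `ψ = Γ'/Γ`. -/
noncomputable def cdigamma (z : ℂ) : ℂ := deriv Complex.Gamma z / Complex.Gamma z

/-- The Euler–Mascheroni constant, `γ_E = -ψ(1)`. -/
noncomputable def eulerGammaC : ℂ := -cdigamma 1

/-- The logarithmic (second) solution of the Jacobi equation with `β = 0` at `x = -1`. -/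
noncomputable def logSol (α : ℝ) (z : ℂ) (x : ℝ) : ℂ :=
  hyp2F1 ((1 + (α : ℂ) + sigmaAB α 0 z) / 2) ((1 + (α : ℂ) - sigmaAB α 0 z) / 2) 1
      (((1 + x) / 2 : ℝ) : ℂ) * ((Real.log ((1 + x) / 2) : ℝ) : ℂ) +
    ∑' n : ℕ,
      cpoch ((1 + (α : ℂ) + sigmaAB α 0 z) / 2) (n + 1) *
          cpoch ((1 + (α : ℂ) - sigmaAB α 0 z) / 2) (n + 1) /
          ((2 : ℂ) ^ (n + 1) * (((n + 1).factorial : ℂ)) ^ 2) *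
          (((1 + x : ℝ) : ℂ)) ^ (n + 1) *
        (cdigamma ((1 + (α : ℂ) + sigmaAB α 0 z) / 2 + ((n : ℂ) + 1)) -
            cdigamma ((1 + (α : ℂ) + sigmaAB α 0 z) / 2) +
            cdigamma ((1 + (α : ℂ) - sigmaAB α 0 z) / 2 + ((n : ℂ) + 1)) -
            cdigamma ((1 + (α : ℂ) - sigmaAB α 0 z) / 2) -
            2 * cdigamma ((n : ℂ) + 2) - 2 * eulerGammaC)

open Filter Topology

/-! ### Power series with radius of convergence at least one -/

/-- The sum of the power series with coefficient sequence `u`. -/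
noncomputable def powSum (u : ℕ → ℂ) (ξ : ℂ) : ℂ := ∑' n, u n * ξ ^ n

/-- The power series with coefficients `u` has radius of convergence at least `1`. -/
def UnitRadius (u : ℕ → ℂ) : Prop :=
  ∀ r : ℝ, 0 < r → r < 1 → Summable fun n => ‖u n‖ * r ^ n

/-- Coefficients of the termwise derivative. -/
def derivCoeff (u : ℕ → ℂ) (n : ℕ) : ℂ := ((n : ℂ) + 1) * u (n + 1)

/-- Coefficients of the power series multiplied by its variable. -/
def mulXCoeff (u : ℕ → ℂ) : ℕ → ℂ
  | 0 => 0
  | n + 1 => u n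

lemma UnitRadius.hasSum {u : ℕ → ℂ} (hu : UnitRadius u) {ξ : ℂ} (hξ : ‖ξ‖ < 1) :
    HasSum (fun n => u n * ξ ^ n) (powSum u ξ) := by
  obtain ⟨r, hr, hr1⟩ := exists_between hξ
  refine (Summable.of_norm_bounded (hu r ((norm_nonneg ξ).trans_lt hr) hr1) fun n => ?_).hasSum
  rw [norm_mul, norm_pow]
  gcongr

/-- A coefficientwise factor of linear growth does not shrink the disc of convergence. -/
lemma UnitRadius.of_le_linear {u v : ℕ → ℂ} (hu : UnitRadius u) (M : ℝ)
    (h : ∀ n : ℕ, ‖v n‖ ≤ M * n * ‖u n‖) : UnitRadius v := by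
  intro r hr hr1
  obtain ⟨t, ht, ht1⟩ := exists_between hr1
  have ht0 : 0 < t := hr.trans ht
  -- `n (r/t)^n` is bounded, so a linear factor is absorbed by enlarging `r` to `t`.
  have hq : ‖r / t‖ < 1 := by
    rw [Real.norm_of_nonneg (by positivity)]
    exact (div_lt_one ht0).2 ht
  have hb := (summable_pow_mul_geometric_of_norm_lt_one 1 hq).tendsto_atTop_zero
  obtain ⟨C, hC⟩ := hb.bddAbove_range
  refine Summable.of_nonneg_of_le (fun n => by positivity) (fun n => ?_)
    ((hu t ht0 ht1).mul_left (|M| * C))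
  have hCn : (n : ℝ) ^ 1 * (r / t) ^ n ≤ C := hC ⟨n, rfl⟩
  have hrt : r ^ n = (r / t) ^ n * t ^ n := by
    rw [← mul_pow, div_mul_cancel₀ _ ht0.ne']
  calc ‖v n‖ * r ^ n ≤ (|M| * n * ‖u n‖) * r ^ n := by
        gcongr
        exact (h n).trans (by gcongr; exact le_abs_self M)
    _ = |M| * ((n : ℝ) ^ 1 * (r / t) ^ n) * (‖u n‖ * t ^ n) := by rw [hrt]; ring
    _ ≤ |M| * C * (‖u n‖ * t ^ n) := by gcongr

lemma UnitRadius.deriv {u : ℕ → ℂ} (hu : UnitRadius u) : UnitRadius (derivCoeff u) := by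
  intro r hr hr1
  have h1 : UnitRadius fun n => (n : ℂ) * u n :=
    hu.of_le_linear 1 fun n => by simp
  have h2 := ((summable_nat_add_iff 1).2 (h1 r hr hr1)).mul_right r⁻¹
  refine h2.congr fun n => ?_
  simp only [derivCoeff]
  push_cast
  rw [pow_succ]
  field_simp

lemma UnitRadius.mulX {u : ℕ → ℂ} (hu : UnitRadius u) : UnitRadius (mulXCoeff u) := by
  intro r hr hr1
  refine (summable_nat_add_iff 1).1 (((hu r hr hr1).mul_right r).congr fun n => ?_)
  simp only [mulXCoeff, pow_succ]
  ring

lemma powSum_mulX {u : ℕ → ℂ} (hu : UnitRadius u) {ξ : ℂ} (hξ : ‖ξ‖ < 1) :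
    powSum (mulXCoeff u) ξ = ξ * powSum u ξ := by
  rw [powSum, (hu.mulX.hasSum hξ).summable.tsum_eq_zero_add, powSum, ← tsum_mul_left]
  simp only [mulXCoeff, zero_mul, zero_add]
  exact tsum_congr fun n => by ring

lemma hasDerivAt_powSum {u : ℕ → ℂ} (hu : UnitRadius u) {ξ : ℂ} (hξ : ‖ξ‖ < 1) :
    HasDerivAt (powSum u) (powSum (derivCoeff u) ξ) ξ := by
  obtain ⟨r, hr, hr1⟩ := exists_between hξ
  have hr0 : 0 < r := (norm_nonneg ξ).trans_lt hr
  have hbound : Summable fun n : ℕ => ‖(n : ℂ) * u n‖ * r ^ (n - 1) := by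
    refine (summable_nat_add_iff 1).1 ((hu.deriv r hr0 hr1).congr fun n => ?_)
    simp [derivCoeff]
  have key := hasDerivAt_tsum_of_isPreconnected (𝕜 := ℂ)
    (g := fun n y => u n * y ^ n) (g' := fun n y => u n * ((n : ℂ) * y ^ (n - 1)))
    (t := Metric.ball (0 : ℂ) r) (y₀ := ξ) (y := ξ) hbound Metric.isOpen_ball
    (convex_ball (0 : ℂ) r).isPreconnected
    (fun n y _ => (hasDerivAt_pow n y).const_mul (u n))
    (fun n y hy => by
      have hy' : ‖y‖ ≤ r := (mem_ball_zero_iff.1 hy).le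
      calc ‖u n * ((n : ℂ) * y ^ (n - 1))‖ = ‖(n : ℂ) * u n‖ * ‖y‖ ^ (n - 1) := by
            simp only [norm_mul, norm_pow]; ring
        _ ≤ _ := by gcongr)
    (by simpa using hr) (hu.hasSum hξ).summable (by simpa using hr)
  have hs : Summable fun n : ℕ => u n * ((n : ℂ) * ξ ^ (n - 1)) := by
    refine (summable_nat_add_iff 1).1 ((hu.deriv.hasSum hξ).summable.congr fun n => ?_)
    simp only [derivCoeff]
    push_cast
    ring
  have hval : powSum (derivCoeff u) ξ = ∑' n : ℕ, u n * ((n : ℂ) * ξ ^ (n - 1)) := by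
    rw [hs.tsum_eq_zero_add, powSum]
    simp only [derivCoeff, Nat.cast_zero, zero_mul, mul_zero, zero_add]
    refine tsum_congr fun n => ?_
    push_cast
    ring
  rw [hval]
  exact key

/-! ### Coefficients of the two Frobenius solutions -/

/-- The coefficient `(a)_n (b)_n / (n!)²` of `₂F₁(a,b;1;ξ)`. -/
noncomputable def hypCoeff (a b : ℂ) (n : ℕ) : ℂ :=
  cpoch a n * cpoch b n / ((n.factorial : ℂ)) ^ 2

/-- The increment of the digamma bracket when its index passes from `k` to `k + 1`. -/
noncomputable def bracketStep (a b : ℂ) (k : ℕ) : ℂ :=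
  (a + k)⁻¹ + (b + k)⁻¹ - 2 * ((k : ℂ) + 1)⁻¹

/-- The coefficient of `ξ ^ n` in the non-logarithmic part of the second solution. -/
noncomputable def logCoeff (a b : ℂ) (n : ℕ) : ℂ :=
  hypCoeff a b n * ∑ k ∈ Finset.range n, bracketStep a b k

lemma cpoch_succ (u : ℂ) (n : ℕ) : cpoch u (n + 1) = cpoch u n * (u + n) := by
  simp [cpoch, Finset.prod_range_succ]

lemma cpoch_one (n : ℕ) : cpoch 1 n = (n.factorial : ℂ) := by
  induction n with
  | zero => simp [cpoch]
  | succ n ih => rw [cpoch_succ, ih, Nat.factorial_succ]; push_cast; ring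

lemma hypCoeff_rec (a b : ℂ) (n : ℕ) :
    ((n : ℂ) + 1) ^ 2 * hypCoeff a b (n + 1) = (a + n) * (b + n) * hypCoeff a b n := by
  have h1 : (n : ℂ) + 1 ≠ 0 := Nat.cast_add_one_ne_zero n
  have h2 : (n.factorial : ℂ) ≠ 0 := Nat.cast_ne_zero.2 n.factorial_ne_zero
  simp only [hypCoeff, cpoch_succ, Nat.factorial_succ]
  push_cast
  field_simp

/-- The inhomogeneous recurrence matching `L G = (a + b) F - 2 (1 - ξ) F'` coefficientwise. -/
lemma logCoeff_rec {a b : ℂ} (ha : ∀ n : ℕ, a + n ≠ 0) (hb : ∀ n : ℕ, b + n ≠ 0) (n : ℕ) :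
    ((n : ℂ) + 1) ^ 2 * logCoeff a b (n + 1) = (a + n) * (b + n) * logCoeff a b n +
      (a + b + 2 * n) * hypCoeff a b n - 2 * ((n : ℂ) + 1) * hypCoeff a b (n + 1) := by
  have h1 : (n : ℂ) + 1 ≠ 0 := Nat.cast_add_one_ne_zero n
  have hrec := hypCoeff_rec a b n
  have hstep : (a + n) * (b + n) * bracketStep a b n =
      (a + b + 2 * n) - 2 * ((a + n) * (b + n)) * ((n : ℂ) + 1)⁻¹ := by
    have := ha n
    have := hb n
    simp only [bracketStep]
    field_simp
    ring
  have hinv : ((n : ℂ) + 1) * ((n : ℂ) + 1)⁻¹ = 1 := mul_inv_cancel₀ h1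
  simp only [logCoeff, Finset.sum_range_succ]
  linear_combination
    (∑ k ∈ Finset.range n, bracketStep a b k + bracketStep a b n + 2 * ((n : ℂ) + 1)⁻¹) * hrec
      + hypCoeff a b n * hstep
      - 2 * ((n : ℂ) + 1) * hypCoeff a b (n + 1) * hinv

lemma tendsto_add_div (a : ℂ) :
    Tendsto (fun n : ℕ => (a + n) / ((n : ℂ) + 1)) atTop (𝓝 1) := by
  have h := ((tendsto_one_div_add_atTop_nhds_zero_nat (𝕜 := ℂ)).const_mul (a - 1)).const_add 1
  simp only [mul_zero, add_zero] at h
  refine h.congr fun n => ?_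
  have h1 : (n : ℂ) + 1 ≠ 0 := Nat.cast_add_one_ne_zero n
  field_simp
  ring

lemma tendsto_inv_add (a : ℂ) : Tendsto (fun n : ℕ => (a + n)⁻¹) atTop (𝓝 0) := by
  have h := (tendsto_one_div_add_atTop_nhds_zero_nat (𝕜 := ℂ)).div (tendsto_add_div a) one_ne_zero
  simp only [zero_div] at h
  refine h.congr fun n => ?_
  have h1 : (n : ℂ) + 1 ≠ 0 := Nat.cast_add_one_ne_zero n
  simp only [Pi.div_apply]
  rw [div_div_div_cancel_right₀ h1, one_div]

lemma hypCoeff_ne_zero {a b : ℂ} (ha : ∀ n : ℕ, a + n ≠ 0) (hb : ∀ n : ℕ, b + n ≠ 0) (n : ℕ) :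
    hypCoeff a b n ≠ 0 :=
  div_ne_zero (mul_ne_zero (Finset.prod_ne_zero_iff.2 fun j _ => ha j)
    (Finset.prod_ne_zero_iff.2 fun j _ => hb j))
    (pow_ne_zero _ (Nat.cast_ne_zero.2 n.factorial_ne_zero))

lemma unitRadius_hypCoeff {a b : ℂ} (ha : ∀ n : ℕ, a + n ≠ 0) (hb : ∀ n : ℕ, b + n ≠ 0) :
    UnitRadius (hypCoeff a b) := by
  intro r hr hr1
  have hne := hypCoeff_ne_zero ha hb
  refine summable_of_ratio_test_tendsto_lt_one hr1
    (Eventually.of_forall fun n => mul_ne_zero (norm_ne_zero_iff.2 (hne n)) (by positivity)) ?_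
  have h := (((tendsto_add_div a).mul (tendsto_add_div b)).norm).mul_const r
  simp only [mul_one, norm_one, one_mul] at h
  refine h.congr fun n => ?_
  have h1 : (n : ℂ) + 1 ≠ 0 := Nat.cast_add_one_ne_zero n
  have hq : (a + n) / ((n : ℂ) + 1) * ((b + n) / ((n : ℂ) + 1)) =
      hypCoeff a b (n + 1) / hypCoeff a b n := by
    rw [div_mul_div_comm, div_eq_div_iff (mul_ne_zero h1 h1) (hne n)]
    linear_combination -hypCoeff_rec a b n
  have h2 : ‖hypCoeff a b n‖ ≠ 0 := norm_ne_zero_iff.2 (hne n)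
  rw [hq, norm_div, norm_mul, norm_mul, norm_norm, norm_norm, norm_pow, norm_pow,
    Real.norm_of_nonneg hr.le, pow_succ]
  field_simp

/-- The steps of the digamma bracket are bounded, so the bracket grows at most linearly. -/
lemma unitRadius_logCoeff {a b : ℂ} (ha : ∀ n : ℕ, a + n ≠ 0) (hb : ∀ n : ℕ, b + n ≠ 0) :
    UnitRadius (logCoeff a b) := by
  have ht : Tendsto (fun k => ‖bracketStep a b k‖) atTop (𝓝 ‖(0 + 0 - 2 * 0 : ℂ)‖) := by
    have h1 := tendsto_inv_add 1
    simp only [add_comm (1 : ℂ)] at h1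
    exact (((tendsto_inv_add a).add (tendsto_inv_add b)).sub (h1.const_mul 2)).norm
  obtain ⟨M, hM⟩ := ht.bddAbove_range
  refine (unitRadius_hypCoeff ha hb).of_le_linear M fun n => ?_
  have hsum : ‖∑ k ∈ Finset.range n, bracketStep a b k‖ ≤ M * n := by
    refine (norm_sum_le_of_le _ fun k _ => hM ⟨k, rfl⟩).trans ?_
    simp [mul_comm]
  rw [logCoeff, norm_mul, mul_comm]
  gcongr

lemma cdigamma_add_nat {s : ℂ} (hs : ∀ m : ℕ, s ≠ -(m : ℂ)) (n : ℕ) :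
    cdigamma (s + n) = cdigamma s + ∑ k ∈ Finset.range n, (s + k)⁻¹ := by
  induction n with
  | zero => simp
  | succ n ih =>
    have h : cdigamma (s + n + 1) = cdigamma (s + n) + (s + n)⁻¹ :=
      Complex.digamma_apply_add_one (s + n) fun m hm =>
        hs (n + m) (by push_cast; linear_combination hm)
    rw [Finset.sum_range_succ, ← add_assoc, ← ih, ← h]
    push_cast
    ring_nf

lemma bracket_eq {a b : ℂ} (ha : ∀ m : ℕ, a ≠ -(m : ℂ)) (hb : ∀ m : ℕ, b ≠ -(m : ℂ)) (n : ℕ) :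
    cdigamma (a + ((n : ℂ) + 1)) - cdigamma a + cdigamma (b + ((n : ℂ) + 1)) - cdigamma b -
      2 * cdigamma ((n : ℂ) + 2) - 2 * eulerGammaC =
    ∑ k ∈ Finset.range (n + 1), bracketStep a b k := by
  have h1 : ∀ m : ℕ, (1 : ℂ) ≠ -(m : ℂ) := fun m hm => by
    have : ((1 + m : ℕ) : ℂ) = 0 := by push_cast; linear_combination hm
    exact absurd (Nat.cast_eq_zero.1 this) (by omega)
  have ea := cdigamma_add_nat ha (n + 1)
  have eb := cdigamma_add_nat hb (n + 1)
  have e1 := cdigamma_add_nat h1 (n + 1)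
  push_cast at ea eb e1
  rw [show (n : ℂ) + 2 = 1 + ((n : ℂ) + 1) by ring, ea, eb, e1, eulerGammaC]
  simp only [bracketStep, Finset.sum_sub_distrib, Finset.sum_add_distrib, ← Finset.mul_sum]
  simp only [add_comm (1 : ℂ)]
  ring

/-! ### The hypergeometric equation -/

/-- `F = ₂F₁(a,b;1;·)` solves the hypergeometric equation. -/
lemma hyp_ode {a b : ℂ} (ha : ∀ n : ℕ, a + n ≠ 0) (hb : ∀ n : ℕ, b + n ≠ 0)
    {ξ : ℂ} (hξ : ‖ξ‖ < 1) :
    ξ * (1 - ξ) * powSum (derivCoeff (derivCoeff (hypCoeff a b))) ξ +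
      (1 - (a + b + 1) * ξ) * powSum (derivCoeff (hypCoeff a b)) ξ -
      a * b * powSum (hypCoeff a b) ξ = 0 := by
  have hc := unitRadius_hypCoeff ha hb
  have hD := hc.deriv
  have hDD := hD.deriv
  have e1 := powSum_mulX hDD hξ
  have e2 := powSum_mulX hDD.mulX hξ
  have e3 := powSum_mulX hD hξ
  have key := ((((hDD.mulX.hasSum hξ).sub (hDD.mulX.mulX.hasSum hξ)).add (hD.hasSum hξ)).sub
    ((hD.mulX.hasSum hξ).mul_left (a + b + 1))).sub ((hc.hasSum hξ).mul_left (a * b))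
  have hz := key.unique ((hasSum_zero (α := ℂ) (β := ℕ)).congr_fun fun n => ?_)
  · linear_combination hz - (1 - ξ) * e1 + e2 + (a + b + 1) * e3
  · rcases n with _ | _ | n
    · have r := hypCoeff_rec a b 0
      simp only [mulXCoeff, derivCoeff]
      push_cast at r ⊢
      linear_combination r
    · have r := hypCoeff_rec a b 1
      simp only [mulXCoeff, derivCoeff]
      push_cast at r ⊢
      linear_combination ξ * r
    · have r := hypCoeff_rec a b (n + 2)
      simp only [mulXCoeff, derivCoeff]
      push_cast at r ⊢
      linear_combination ξ ^ (n + 2) * r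

/-- The hypergeometric operator applied to the non-logarithmic part cancels the terms
`2 (1 - ξ) F' - (a + b) F` which it produces from `F log ξ`. -/
lemma log_ode {a b : ℂ} (ha : ∀ n : ℕ, a + n ≠ 0) (hb : ∀ n : ℕ, b + n ≠ 0)
    {ξ : ℂ} (hξ : ‖ξ‖ < 1) :
    ξ * (1 - ξ) * powSum (derivCoeff (derivCoeff (logCoeff a b))) ξ +
      (1 - (a + b + 1) * ξ) * powSum (derivCoeff (logCoeff a b)) ξ -
      a * b * powSum (logCoeff a b) ξ +
      (2 * (1 - ξ) * powSum (derivCoeff (hypCoeff a b)) ξ -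
        (a + b) * powSum (hypCoeff a b) ξ) = 0 := by
  have hc := unitRadius_hypCoeff ha hb
  have hcD := hc.deriv
  have hd := unitRadius_logCoeff ha hb
  have hD := hd.deriv
  have hDD := hD.deriv
  have e1 := powSum_mulX hDD hξ
  have e2 := powSum_mulX hDD.mulX hξ
  have e3 := powSum_mulX hD hξ
  have e4 := powSum_mulX hcD hξ
  have key := (((((hDD.mulX.hasSum hξ).sub (hDD.mulX.mulX.hasSum hξ)).add (hD.hasSum hξ)).sub
    ((hD.mulX.hasSum hξ).mul_left (a + b + 1))).sub ((hd.hasSum hξ).mul_left (a * b))).add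
    ((((hcD.hasSum hξ).mul_left 2).sub ((hcD.mulX.hasSum hξ).mul_left 2)).sub
      ((hc.hasSum hξ).mul_left (a + b)))
  have hz := key.unique ((hasSum_zero (α := ℂ) (β := ℕ)).congr_fun fun n => ?_)
  · linear_combination hz - (1 - ξ) * e1 + e2 + (a + b + 1) * e3 + 2 * e4
  · rcases n with _ | _ | n
    · have r := logCoeff_rec ha hb 0
      simp only [mulXCoeff, derivCoeff]
      push_cast at r ⊢
      linear_combination r
    · have r := logCoeff_rec ha hb 1
      simp only [mulXCoeff, derivCoeff]
      push_cast at r ⊢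
      linear_combination ξ * r
    · have r := logCoeff_rec ha hb (n + 2)
      simp only [mulXCoeff, derivCoeff]
      push_cast at r ⊢
      linear_combination ξ ^ (n + 2) * r

/-! ### Passing to the variable `x ∈ (-1, 1)` -/

/-- The variable `ξ = (1 + x) / 2`, as a complex number. -/
noncomputable def xiOf (x : ℝ) : ℂ := (((1 + x) / 2 : ℝ) : ℂ)

lemma norm_xiOf_lt {x : ℝ} (hx : x ∈ Set.Ioo (-1 : ℝ) 1) : ‖xiOf x‖ < 1 := by
  rw [xiOf, Complex.norm_real, Real.norm_eq_abs, abs_lt]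
  constructor <;> linarith [hx.1, hx.2]

lemma xiOf_ne_zero {x : ℝ} (hx : x ∈ Set.Ioo (-1 : ℝ) 1) : xiOf x ≠ 0 :=
  Complex.ofReal_ne_zero.2 (by linarith [hx.1])

lemma hasDerivAt_xiOf (x : ℝ) : HasDerivAt xiOf (1 / 2) x := by
  have h : HasDerivAt (fun x : ℝ => (1 + x) / 2) (1 / 2) x :=
    ((hasDerivAt_id x).const_add 1).div_const 2
  have h2 := h.ofReal_comp
  rw [show (((1 / 2 : ℝ)) : ℂ) = 1 / 2 by push_cast; rfl] at h2
  exact h2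

lemma hasDerivAt_log_xi {x : ℝ} (hx : x ∈ Set.Ioo (-1 : ℝ) 1) :
    HasDerivAt (fun x : ℝ => ((Real.log ((1 + x) / 2) : ℝ) : ℂ)) (1 / 2 * (xiOf x)⁻¹) x := by
  have h : HasDerivAt (fun x : ℝ => (1 + x) / 2) (1 / 2) x :=
    ((hasDerivAt_id x).const_add 1).div_const 2
  have h2 := (h.log (by linarith [hx.1])).ofReal_comp
  convert h2 using 1
  rw [xiOf, Complex.ofReal_div (1 / 2)]
  push_cast
  rw [div_eq_mul_inv (1 / 2 : ℂ)]

lemma hasDerivAt_powSum_xi {u : ℕ → ℂ} (hu : UnitRadius u) {x : ℝ}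
    (hx : x ∈ Set.Ioo (-1 : ℝ) 1) :
    HasDerivAt (fun x => powSum u (xiOf x)) (1 / 2 * powSum (derivCoeff u) (xiOf x)) x :=
  (hasDerivAt_powSum hu (norm_xiOf_lt hx)).scomp x (hasDerivAt_xiOf x)

lemma logSol_eq {α : ℝ} {z a b : ℂ} (hadef : a = (1 + (α : ℂ) + sigmaAB α 0 z) / 2)
    (hbdef : b = (1 + (α : ℂ) - sigmaAB α 0 z) / 2)
    (ha : ∀ m : ℕ, a ≠ -(m : ℂ)) (hb : ∀ m : ℕ, b ≠ -(m : ℂ))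
    (hd : UnitRadius (logCoeff a b)) {x : ℝ} (hx : x ∈ Set.Ioo (-1 : ℝ) 1) :
    logSol α z x = powSum (hypCoeff a b) (xiOf x) * ((Real.log ((1 + x) / 2) : ℝ) : ℂ) +
      powSum (logCoeff a b) (xiOf x) := by
  rw [logSol, ← hadef, ← hbdef]
  congr 1
  · congr 1
    refine tsum_congr fun n => ?_
    rw [cpoch_one, hypCoeff, xiOf, sq]
  · rw [powSum, (hd.hasSum (norm_xiOf_lt hx)).summable.tsum_eq_zero_add]
    have h0 : logCoeff a b 0 = 0 := by simp [logCoeff]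
    rw [h0, zero_mul, zero_add]
    refine tsum_congr fun n => ?_
    rw [bracket_eq ha hb, logCoeff, hypCoeff, xiOf]
    push_cast
    rw [div_pow]
    field_simp

/-- `a₊ a₋ = -z`, since the square of the principal root is the radicand. -/
lemma exponent_prod (α : ℝ) (z : ℂ) :
    (1 + (α : ℂ) + sigmaAB α 0 z) / 2 * ((1 + (α : ℂ) - sigmaAB α 0 z) / 2) = -z := by
  have h : sigmaAB α 0 z ^ 2 = (1 + (α : ℂ)) ^ 2 + 4 * z := by
    rw [sigmaAB, one_div]
    have := Complex.cpow_nat_inv_pow ((((1 + α + 0 : ℝ) : ℂ)) ^ 2 + 4 * z) two_ne_zero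
    push_cast at this ⊢
    rw [this]
    ring
  linear_combination -h / 4

/-- The logarithmic solution is a twice differentiable solution of the Jacobi equation
`-(1-x²)y'' + (α+(α+2)x)y' = z y` (the case `β = 0`) on `(-1,1)`,
provided neither `a₊ = (1+α+σ)/2` nor `a₋ = (1+α-σ)/2` is a nonpositive integer. -/
theorem logSol_solves_ode (α : ℝ) (z : ℂ)
    (h : ∀ n : ℕ, (1 + (α : ℂ) + sigmaAB α 0 z) / 2 ≠ -(n : ℂ) ∧
      (1 + (α : ℂ) - sigmaAB α 0 z) / 2 ≠ -(n : ℂ)) :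
    ∀ x ∈ Set.Ioo (-1 : ℝ) 1,
      DifferentiableAt ℝ (logSol α z) x ∧
      DifferentiableAt ℝ (deriv (logSol α z)) x ∧
      -((1 - x ^ 2 : ℝ) : ℂ) * deriv (deriv (logSol α z)) x +
          ((α + (α + 2) * x : ℝ) : ℂ) * deriv (logSol α z) x =
        z * logSol α z x := by
  have hprod := exponent_prod α z
  obtain ⟨a, hadef⟩ : ∃ a, a = (1 + (α : ℂ) + sigmaAB α 0 z) / 2 := ⟨_, rfl⟩
  obtain ⟨b, hbdef⟩ : ∃ b, b = (1 + (α : ℂ) - sigmaAB α 0 z) / 2 := ⟨_, rfl⟩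
  have hsum : a + b = 1 + (α : ℂ) := by rw [hadef, hbdef]; ring
  rw [← hadef, ← hbdef] at hprod
  have ha : ∀ m : ℕ, a ≠ -(m : ℂ) := fun m => hadef ▸ (h m).1
  have hb : ∀ m : ℕ, b ≠ -(m : ℂ) := fun m => hbdef ▸ (h m).2
  have ha' : ∀ m : ℕ, a + m ≠ 0 := fun m hm => ha m (eq_neg_of_add_eq_zero_left hm)
  have hb' : ∀ m : ℕ, b + m ≠ 0 := fun m hm => hb m (eq_neg_of_add_eq_zero_left hm)
  have hc := unitRadius_hypCoeff ha' hb'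
  have hd := unitRadius_logCoeff ha' hb'
  have hnhds : ∀ x ∈ Set.Ioo (-1 : ℝ) 1, ∀ᶠ t in 𝓝 x, t ∈ Set.Ioo (-1 : ℝ) 1 :=
    fun x hx => isOpen_Ioo.mem_nhds hx
  have D1 : ∀ x ∈ Set.Ioo (-1 : ℝ) 1, HasDerivAt (logSol α z)
      (1 / 2 * powSum (derivCoeff (hypCoeff a b)) (xiOf x) *
          ((Real.log ((1 + x) / 2) : ℝ) : ℂ) +
        powSum (hypCoeff a b) (xiOf x) * (1 / 2 * (xiOf x)⁻¹) +
        1 / 2 * powSum (derivCoeff (logCoeff a b)) (xiOf x)) x := fun x hx =>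
    (((hasDerivAt_powSum_xi hc hx).mul (hasDerivAt_log_xi hx)).add
      (hasDerivAt_powSum_xi hd hx)).congr_of_eventuallyEq
      ((hnhds x hx).mono fun t ht => logSol_eq hadef hbdef ha hb hd ht)
  intro x hx
  have hξ0 := xiOf_ne_zero hx
  have D2 := (((((hasDerivAt_powSum_xi hc.deriv hx).const_mul (1 / 2)).mul
      (hasDerivAt_log_xi hx)).add ((hasDerivAt_powSum_xi hc hx).mul
        (((hasDerivAt_xiOf x).inv hξ0).const_mul (1 / 2)))).add
      ((hasDerivAt_powSum_xi hd.deriv hx).const_mul (1 / 2))).congr_of_eventuallyEq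
      (f₁ := deriv (logSol α z)) ((hnhds x hx).mono fun t ht => (D1 t ht).deriv)
  refine ⟨(D1 x hx).differentiableAt, D2.differentiableAt, ?_⟩
  rw [D2.deriv, (D1 x hx).deriv, logSol_eq hadef hbdef ha hb hd hx]
  have o1 := hyp_ode ha' hb' (norm_xiOf_lt hx)
  have o2 := log_ode ha' hb' (norm_xiOf_lt hx)
  have hxξ : (x : ℂ) = 2 * xiOf x - 1 := by simp only [xiOf]; push_cast; ring
  have hα : (α : ℂ) = a + b - 1 := by rw [hsum]; ring
  have hz : z = -(a * b) := by rw [hprod]; ring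
  push_cast
  rw [hxξ, hα, hz]
  simp only [Pi.inv_apply]
  generalize powSum (derivCoeff (derivCoeff (hypCoeff a b))) (xiOf x) = F2 at *
  generalize powSum (derivCoeff (hypCoeff a b)) (xiOf x) = F1 at *
  generalize powSum (hypCoeff a b) (xiOf x) = F0 at *
  generalize powSum (derivCoeff (derivCoeff (logCoeff a b))) (xiOf x) = G2 at *
  generalize powSum (derivCoeff (logCoeff a b)) (xiOf x) = G1 at *
  generalize powSum (logCoeff a b) (xiOf x) = G0 at *
  generalize ((Real.log ((1 + x) / 2) : ℝ) : ℂ) = ℓ at *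
  generalize xiOf x = ξ at *
  field_simp
  linear_combination -4 * ξ ^ 2 * (ℓ * o1 + o2)
end
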